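/- arXiv:1608.07021 — 6 statements merged into one kernel-verified Lean document; each statement's English description precedes it below -/
import Mathlib

section
/- Every M♮-concave function f : 2^N → ℝ ∪ {-∞} has the multiple exchange property (M♮-EXC_m): for any X, Y ⊆ N and any I ⊆ X \ Y, there exists J ⊆ Y \ X such that f(X) + f(Y) ≤ f((X \ I) ∪ J) + f((Y \ J) ∪ I). -/
open Finset

/-- (M♮-EXC): exchange property for set functions into ℝ ∪ {-∞}. -/
def MExc {N : Type*} [DecidableEq N] (f : Finset N → WithBot ℝ) : Prop :=
  ∀ X Y : Finset N, ∀ i ∈ X \ Y,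
    f X + f Y ≤ max (f (X.erase i) + f (insert i Y))
      ((Y \ X).sup fun j => f (insert j (X.erase i)) + f ((insert i Y).erase j))

/-- (M♮-EXC_m): multiple exchange property for set functions. -/
def MExcM {N : Type*} [DecidableEq N] (f : Finset N → WithBot ℝ) : Prop :=
  ∀ X Y : Finset N, ∀ I ⊆ X \ Y, ∃ J ⊆ Y \ X,
    f X + f Y ≤ f ((X \ I) ∪ J) + f ((Y \ J) ∪ I)

/-!
Fix `X`, `Y`, `I`. On subsets `J` of `Y \ X`, the functions `f ((X \ I) ∪ J)` and `f ((Y \ J) ∪ I)`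
both inherit the exchange property, and the claim bounds from below the maximum of their sum. As in
Fenchel duality, a separating hyperplane reduces the bound, for the concave closures of the two
functions, to separate maxima of the functions tilted by opposite linear functionals; these are
controlled because, for a set `B`, the maximum of `f (P ∪ J)` over `J ⊆ B` is submodular in `P`
disjoint from `B`.

It remains to see that the sum of the two concave closures is maximized at a vertex of the cube.
At an extreme optimal point, an exchange at a fractional coordinate `i` gives, for each function, a
direction `e i`, or `e i - e j` with `j` another fractional coordinate, along which its closure has
no concave kink. By a dimension count the spans of the directions of the two functions intersect
nontrivially, and moving back and forth along a common direction contradicts extremality.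
-/

section PairedFamilies

variable {ι K E : Type*} [Field K] [AddCommGroup E] [Module K E]

/-- Modulo the subspace `U`, every member of the family `e` vanishes or coincides with another
member. -/
def PairsUp (e : ι → E) (U : Submodule K E) : Prop :=
  ∀ i, e i ∈ U ∨ ∃ j ≠ i, e i - e j ∈ U

open Classical in
lemma PairsUp.two_mul_card_image_mkQ_le [Fintype ι] {e : ι → E} {U : Submodule K E}
    (hU : PairsUp e U) :
    2 * #((univ.filter fun i => e i ∉ U).image (U.mkQ ∘ e)) ≤ #{i | e i ∉ U} := by
  refine mul_card_image_le_card _ 2 fun b hb => ?_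
  obtain ⟨i, hi, rfl⟩ := mem_image.1 hb
  have hiU : e i ∉ U := (mem_filter.1 hi).2
  obtain ⟨j, hji, hij⟩ := (hU i).resolve_left hiU
  have hjU : e j ∉ U := fun hj => hiU (by simpa using U.add_mem hij hj)
  have hmk : U.mkQ (e j) = U.mkQ (e i) := ((Submodule.Quotient.eq U).2 hij).symm
  rw [← card_pair hji]
  exact card_le_card <| insert_subset_iff.2 ⟨mem_filter.2 ⟨by simp [hjU], hmk⟩,
    singleton_subset_iff.2 (mem_filter.2 ⟨hi, rfl⟩)⟩

open Classical in
lemma finrank_quotient_le_card_image_mkQ [Fintype ι] (b : Module.Basis ι K E)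
    (U : Submodule K E) :
    Module.finrank K (E ⧸ U) ≤ #((univ.filter fun i => b i ∉ U).image (U.mkQ ∘ b)) := by
  set S := (univ.filter fun i => b i ∉ U).image (U.mkQ ∘ b)
  have hspan : Submodule.span K (S : Set (E ⧸ U)) = ⊤ := by
    rw [eq_top_iff, ← U.range_mkQ, LinearMap.range_eq_map, ← b.span_eq, Submodule.map_span,
      Submodule.span_le]
    rintro _ ⟨_, ⟨i, rfl⟩, rfl⟩
    by_cases hi : b i ∈ U
    · simp [(Submodule.Quotient.mk_eq_zero U).2 hi]
    · exact Submodule.subset_span (mem_image_of_mem _ (by simp [hi]))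
  have hle := finrank_span_finset_le_card (R := K) S
  rwa [Set.finrank, hspan, finrank_top] at hle

open Classical in
lemma PairsUp.card_add_card_le_two_mul_finrank [Fintype ι] {b : Module.Basis ι K E}
    {U : Submodule K E} (hU : PairsUp b U) :
    Fintype.card ι + #{i | b i ∈ U} ≤ 2 * Module.finrank K U := by
  have : FiniteDimensional K E := b.finiteDimensional_of_finite
  have hquot := finrank_quotient_le_card_image_mkQ b U
  have hpair := hU.two_mul_card_image_mkQ_le
  have hsplit := card_filter_add_card_filter_not (s := univ) fun i => b i ∈ U
  have hdim := U.finrank_quotient_add_finrank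
  rw [Module.finrank_eq_card_basis b] at hdim
  rw [card_univ] at hsplit
  omega

lemma PairsUp.inf_ker_sumCoords {b : Module.Basis ι K E} {U : Submodule K E}
    (hU : PairsUp b U) (hb : ∀ i, b i ∉ U) : PairsUp b (U ⊓ LinearMap.ker b.sumCoords) := by
  intro i
  obtain ⟨j, hji, hij⟩ := (hU i).resolve_left (hb i)
  exact Or.inr ⟨j, hji, hij, by simp [-Module.Basis.coe_sumCoords]⟩

lemma finrank_add_finrank_le_of_disjoint_of_le [FiniteDimensional K E] {U V W : Submodule K E}
    (hUV : Disjoint U V) (hU : U ≤ W) (hV : V ≤ W) :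
    Module.finrank K U + Module.finrank K V ≤ Module.finrank K W := by
  rw [← Submodule.finrank_sup_add_finrank_inf_eq, hUV.eq_bot, finrank_bot, add_zero]
  exact Submodule.finrank_mono (sup_le hU hV)

-- Each subspace has at least half the dimension of `E`; the dimension that is missing for an
-- intersection comes from a basis vector in `U` or `V`, or from passing to a hyperplane.
lemma PairsUp.not_disjoint_of_basis [Finite ι] [Nonempty ι] {b : Module.Basis ι K E}
    {U V : Submodule K E} (hU : PairsUp b U) (hV : PairsUp b V) : ¬ Disjoint U V := by
  classical
  intro hUV
  have := Fintype.ofFinite ι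
  have : FiniteDimensional K E := b.finiteDimensional_of_finite
  by_cases hb : ∃ i, b i ∈ U ∨ b i ∈ V
  · have hle := Submodule.finrank_add_finrank_le_of_disjoint hUV
    have hcardU := hU.card_add_card_le_two_mul_finrank
    have hcardV := hV.card_add_card_le_two_mul_finrank
    have hpos : 0 < #{i | b i ∈ U} ∨ 0 < #{i | b i ∈ V} := by
      obtain ⟨i, hi | hi⟩ := hb
      · exact Or.inl (card_pos.2 ⟨i, by simpa using hi⟩)
      · exact Or.inr (card_pos.2 ⟨i, by simpa using hi⟩)
    rw [Module.finrank_eq_card_basis b] at hle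
    omega
  · push Not at hb
    have hproper : LinearMap.ker b.sumCoords ≠ ⊤ := fun htop => by
      obtain ⟨i⟩ := ‹Nonempty ι›
      simpa using (htop ▸ Submodule.mem_top : b i ∈ LinearMap.ker b.sumCoords)
    have hlt := Submodule.finrank_lt hproper
    have hle := finrank_add_finrank_le_of_disjoint_of_le
      (hUV.mono (inf_le_left (b := LinearMap.ker b.sumCoords)) inf_le_left)
      inf_le_right inf_le_right
    have hcardU := (hU.inf_ker_sumCoords fun i => (hb i).1).card_add_card_le_two_mul_finrank
    have hcardV := (hV.inf_ker_sumCoords fun i => (hb i).2).card_add_card_le_two_mul_finrank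
    rw [Module.finrank_eq_card_basis b] at hlt
    omega

lemma PairsUp.not_disjoint [Finite ι] [Nonempty ι] {e : ι → E} (he : LinearIndependent K e)
    {U V : Submodule K E} (hU : PairsUp e U) (hV : PairsUp e V) : ¬ Disjoint U V := by
  have hspan {W : Submodule K E} (hW : PairsUp e W) :
      PairsUp (Module.Basis.span he) (W.comap (Submodule.span K (Set.range e)).subtype) :=
    fun i => by simpa [Module.Basis.span_apply] using hW i
  intro hUV
  refine (hspan hU).not_disjoint_of_basis (hspan hV) (Submodule.disjoint_def.2 fun x hxU hxV => ?_)
  exact Subtype.ext (Submodule.disjoint_def.1 hUV x hxU hxV)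

end PairedFamilies

section FeasibleDirections

variable {E : Type*} [AddCommGroup E] [Module ℝ E]

/-- The cone of feasible directions of `C` at `q`. For convex `C ∋ q` it consists of the vectors
along which one can move from `q` without leaving `C` at once. -/
def feasibleCone (C : Set E) (q : E) : PointedCone ℝ E :=
  PointedCone.hull ℝ ((· - q) '' C)

lemma sub_mem_feasibleCone {C : Set E} {p : E} (hp : p ∈ C) (q : E) :
    p - q ∈ feasibleCone C q :=
  PointedCone.subset_hull (Set.mem_image_of_mem _ hp)

open Filter Topology in
lemma eventually_add_smul_mem {C : Set E} (hC : Convex ℝ C) {q v : E} (hq : q ∈ C)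
    (hv : v ∈ feasibleCone C q) : ∀ᶠ ε in 𝓝[>] (0 : ℝ), q + ε • v ∈ C := by
  have hscale (c : ℝ) (hc : 0 < c) : Tendsto (fun ε => ε * c) (𝓝[>] 0) (𝓝[>] 0) :=
    tendsto_nhdsWithin_iff.2 ⟨(Continuous.tendsto' (by fun_prop) _ _ (by simp)).mono_left
      nhdsWithin_le_nhds, eventually_mem_nhdsWithin.mono fun ε hε => mul_pos hε hc⟩
  induction hv using Submodule.span_induction with
  | mem v hv =>
    obtain ⟨p, hp, rfl⟩ := hv
    filter_upwards [Ioo_mem_nhdsGT zero_lt_one] with ε hε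
    exact hC.add_smul_sub_mem hq hp ⟨hε.1.le, hε.2.le⟩
  | zero => simp [hq]
  | add v w _ _ hv hw =>
    filter_upwards [(hscale 2 two_pos).eventually hv, (hscale 2 two_pos).eventually hw]
      with ε hεv hεw
    convert! hC hεv hεw one_half_pos.le one_half_pos.le (add_halves 1) using 1
    module
  | smul c v _ hv =>
    obtain ⟨c, hc⟩ := c
    rcases hc.eq_or_lt with rfl | hc'
    · simp [hq]
    · filter_upwards [(hscale c hc').eventually hv] with ε hε
      rwa [mul_smul] at hε

lemma exists_notMem_sub_mem_feasibleCone {S T : Set E} {q : E} (hq : q ∈ convexHull ℝ S)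
    (hT : Convex ℝ T) (hqT : q ∉ T) :
    ∃ v ∈ S, v ∉ T ∧ q - v ∈ feasibleCone (convexHull ℝ S) q := by
  obtain ⟨ι, _, z, w, hz, -, hw, hw1, rfl⟩ := eq_pos_convex_span_of_mem_convexHull hq
  set q := ∑ i, w i • z i with hqdef
  by_contra! hS
  have hfeas (k : ι) : q - z k ∈ feasibleCone (convexHull ℝ S) q := by
    classical
    have hsum : ∑ j ∈ univ.erase k, w j • (z j - q) = w k • (q - z k) := by
      have htotal : ∑ j, w j • (z j - q) = 0 := by
        simp [smul_sub, sum_sub_distrib, ← sum_smul, hw1, hqdef]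
      rw [← add_sum_erase _ _ (mem_univ k)] at htotal
      rw [eq_neg_of_add_eq_zero_right htotal, ← smul_neg, neg_sub]
    rw [← inv_smul_smul₀ (hw k).ne' (q - z k), ← hsum]
    refine PointedCone.smul_mem _ (inv_pos.2 (hw k)).le (Submodule.sum_mem _ fun j _ => ?_)
    exact PointedCone.smul_mem _ (hw j).le
      (sub_mem_feasibleCone (subset_convexHull ℝ S (hz ⟨j, rfl⟩)) q)
  refine hqT (hT.sum_mem (fun i _ => (hw i).le) hw1 fun k _ => ?_)
  by_contra hk
  exact hS (z k) (hz ⟨k, rfl⟩) hk (hfeas k)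

/-- Horizontal directions `d` in which one can move from `q` within `C`, forwards and backwards,
with no total loss of height. Such moves need not be opposite in `E × ℝ`: only their horizontal
parts are. -/
def reversibleDirs (C : Set (E × ℝ)) (q : E × ℝ) : Submodule ℝ E where
  carrier := {d | ∃ s s' : ℝ, (d, s) ∈ feasibleCone C q ∧ (-d, s') ∈ feasibleCone C q ∧ 0 ≤ s + s'}
  add_mem' := by
    rintro d e ⟨s, s', hs, hs', hle⟩ ⟨t, t', ht, ht', hle'⟩
    refine ⟨s + t, s' + t', add_mem hs ht, ?_, by linarith⟩
    rw [neg_add]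
    exact add_mem hs' ht'
  zero_mem' := ⟨0, 0, zero_mem _, by simp [← Prod.zero_eq_mk], by simp⟩
  smul_mem' := by
    rintro c d ⟨s, s', hs, hs', hle⟩
    rcases le_total 0 c with hc | hc
    · refine ⟨c * s, c * s', (feasibleCone C q).smul_mem hc hs, ?_, ?_⟩
      · rw [← smul_neg]
        exact (feasibleCone C q).smul_mem hc hs'
      · rw [← mul_add]
        exact mul_nonneg hc hle
    · refine ⟨-c * s', -c * s, ?_, ?_, ?_⟩
      · rw [← neg_smul_neg]
        exact (feasibleCone C q).smul_mem (neg_nonneg.2 hc) hs'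
      · rw [← neg_smul]
        exact (feasibleCone C q).smul_mem (neg_nonneg.2 hc) hs
      · rw [← mul_add, add_comm]
        exact mul_nonneg (neg_nonneg.2 hc) hle

/-- Pairs of a point of `C₁` and a point of `C₂` above the same point of `E`. -/
def fiberPairs (C₁ C₂ : Set (E × ℝ)) : Set ((E × ℝ) × (E × ℝ)) :=
  {p | p.1 ∈ C₁ ∧ p.2 ∈ C₂ ∧ p.1.1 = p.2.1}

open Filter Topology in
lemma disjoint_reversibleDirs {C₁ C₂ : Set (E × ℝ)} (hC₁ : Convex ℝ C₁) (hC₂ : Convex ℝ C₂)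
    {q : (E × ℝ) × (E × ℝ)} (hq : q ∈ (fiberPairs C₁ C₂).extremePoints ℝ)
    (hmax : ∀ p ∈ fiberPairs C₁ C₂, p.1.2 + p.2.2 ≤ q.1.2 + q.2.2) :
    Disjoint (reversibleDirs C₁ q.1) (reversibleDirs C₂ q.2) := by
  obtain ⟨⟨hq₁, hq₂, hfib⟩, hext⟩ := mem_extremePoints.1 hq
  refine Submodule.disjoint_def.2 fun d ⟨s₁, s₁', h₁, h₁', hle₁⟩ ⟨s₂, s₂', h₂, h₂', hle₂⟩ => ?_
  obtain ⟨ε, hε₁, hε₁', hε₂, hε₂', hε⟩ := ((eventually_add_smul_mem hC₁ hq₁ h₁).and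
    ((eventually_add_smul_mem hC₁ hq₁ h₁').and ((eventually_add_smul_mem hC₂ hq₂ h₂).and
      ((eventually_add_smul_mem hC₂ hq₂ h₂').and eventually_mem_nhdsWithin)))).exists
  replace hε : 0 < ε := hε
  have hp : q + ε • ((d, s₁), (d, s₂)) ∈ fiberPairs C₁ C₂ := ⟨hε₁, hε₂, by simp [hfib]⟩
  have hp' : q + ε • ((-d, s₁'), (-d, s₂')) ∈ fiberPairs C₁ C₂ := ⟨hε₁', hε₂', by simp [hfib]⟩
  have hheight : s₁ + s₂ ≤ 0 := by
    have := hmax _ hp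
    simp only [Prod.fst_add, Prod.snd_add, Prod.smul_fst, Prod.smul_snd, smul_eq_mul] at this
    exact nonpos_of_mul_nonpos_right (by linarith) hε
  have hheight' : s₁' + s₂' ≤ 0 := by
    have := hmax _ hp'
    simp only [Prod.fst_add, Prod.snd_add, Prod.smul_fst, Prod.smul_snd, smul_eq_mul] at this
    exact nonpos_of_mul_nonpos_right (by linarith) hε
  obtain rfl : s₁' = -s₁ := by linarith
  obtain rfl : s₂' = -s₂ := by linarith
  have hmid : q ∈ openSegment ℝ (q + ε • ((d, s₁), (d, s₂))) (q + ε • ((-d, -s₁), (-d, -s₂))) := by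
    refine ⟨1 / 2, 1 / 2, one_half_pos, one_half_pos, add_halves 1, ?_⟩
    simp only [← Prod.neg_mk]
    module
  have hzero : ε • ((d, s₁), (d, s₂)) = 0 := left_eq_add.1 (hext _ hp _ hp' hmid).1.symm
  exact congrArg (fun p => p.1.1) ((smul_eq_zero_iff_right hε.ne').1 hzero)

end FeasibleDirections

section Duality

variable {E : Type*} [AddCommGroup E] [Module ℝ E] [TopologicalSpace E] [IsTopologicalAddGroup E]
  [ContinuousSMul ℝ E] [LocallyConvexSpace ℝ E] [T2Space E]

lemma exists_mem_extremePoints_forall_le {K : Set E} (hK : IsCompact K)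
    (hne : K.Nonempty) (φ : StrongDual ℝ E) :
    ∃ x ∈ K.extremePoints ℝ, ∀ y ∈ K, φ y ≤ φ x := by
  obtain ⟨m, hm, hmax⟩ := hK.exists_isMaxOn hne φ.continuous.continuousOn
  have hexp : IsExposed ℝ K (φ.toExposed K) := ContinuousLinearMap.toExposed.isExposed
  obtain ⟨x, hx⟩ := (hexp.isCompact hK).extremePoints_nonempty ⟨m, hm, fun y hy => hmax hy⟩
  exact ⟨x, hexp.isExtreme.extremePoints_subset_extremePoints hx, hx.1.2⟩

lemma exists_zero_mem_of_forall_dual {M : Set (E × ℝ)} (hconv : Convex ℝ M) (hcomp : IsCompact M)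
    {c : ℝ} (h : ∀ l : StrongDual ℝ E, ∃ p ∈ M, c ≤ l p.1 + p.2) :
    ∃ t, c ≤ t ∧ ((0, t) : E × ℝ) ∈ M := by
  by_contra! hM
  have hdisj : Disjoint M ({0} ×ˢ Set.Ici c) :=
    Set.disjoint_left.2 fun ⟨x, t⟩ hx ⟨h0, ht⟩ => hM t ht (by rwa [← show x = 0 from h0])
  obtain ⟨f, u, v, hfu, huv, hfv⟩ := geometric_hahn_banach_compact_closed hconv hcomp
    ((convex_singleton 0).prod (convex_Ici c)) (isClosed_singleton.prod isClosed_Ici) hdisj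
  set τ := f (0, 1)
  have hf (x : E) (t : ℝ) : f (x, t) = f (x, 0) + t * τ := by
    rw [← smul_eq_mul, ← map_smul, ← map_add]
    simp
  have hray (t : ℝ) (ht : c ≤ t) : v < t * τ := by
    simpa only [hf 0 t, ← Prod.zero_eq_mk, map_zero, zero_add] using hfv (0, t) ⟨rfl, ht⟩
  have hτ : 0 ≤ τ := by
    by_contra! hneg
    have := hray _ (le_max_left c (v / τ))
    exact absurd this (not_lt.2 ((div_le_iff_of_neg hneg).1 (le_max_right c (v / τ))))
  obtain ⟨R, hR⟩ := (hcomp.image continuous_snd).bddAbove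
  -- The separating functional may be horizontal; adding a small positive slope keeps it separating.
  obtain ⟨η, hη, hηR⟩ : ∃ η > 0, η * (R - c) < v - u :=
    exists_pos_mul_lt (sub_pos.2 huv) (R - c) |>.imp fun η h => ⟨h.1, by linarith [h.2]⟩
  obtain ⟨p, hp, hle⟩ := h ((τ + η)⁻¹ • f.comp (ContinuousLinearMap.inl ℝ E ℝ))
  have hpos : 0 < τ + η := by positivity
  have hle' : (τ + η) * (c - p.2) ≤ f (p.1, 0) := by
    rw [← le_inv_mul_iff₀ hpos]
    simpa [sub_le_iff_le_add] using hle
  have hpu := hfu p hp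
  rw [← Prod.mk.eta (p := p), hf] at hpu
  have hpR := mul_le_mul_of_nonneg_left (hR (Set.mem_image_of_mem _ hp)) hη.le
  linarith [hray c le_rfl]

lemma exists_mem_fiberPairs_of_forall_dual {C₁ C₂ : Set (E × ℝ)} (hconv₁ : Convex ℝ C₁)
    (hconv₂ : Convex ℝ C₂) (hcomp₁ : IsCompact C₁) (hcomp₂ : IsCompact C₂) {c : ℝ}
    (h : ∀ l : StrongDual ℝ E, ∃ p₁ ∈ C₁, ∃ p₂ ∈ C₂, c ≤ l (p₂.1 - p₁.1) + (p₁.2 + p₂.2)) :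
    ∃ p ∈ fiberPairs C₁ C₂, c ≤ p.1.2 + p.2.2 := by
  let L : (E × ℝ) × (E × ℝ) →ₗ[ℝ] E × ℝ :=
    (LinearMap.fst ℝ E ℝ ∘ₗ (LinearMap.snd ℝ _ _ - LinearMap.fst ℝ _ _)).prod
      (LinearMap.snd ℝ E ℝ ∘ₗ (LinearMap.fst ℝ _ _ + LinearMap.snd ℝ _ _))
  have hL : Continuous L := by
    change Continuous fun p : (E × ℝ) × (E × ℝ) => ((p.2 - p.1).1, (p.1 + p.2).2)
    fun_prop
  obtain ⟨t, ht, ⟨p₁, p₂⟩, ⟨hp₁, hp₂⟩, hp⟩ := exists_zero_mem_of_forall_dual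
    ((hconv₁.prod hconv₂).linear_image L) ((hcomp₁.prod hcomp₂).image hL) fun l => by
      obtain ⟨p₁, hp₁, p₂, hp₂, hle⟩ := h l
      exact ⟨_, ⟨(p₁, p₂), ⟨hp₁, hp₂⟩, rfl⟩, hle⟩
  obtain ⟨hfst, hsnd⟩ := Prod.ext_iff.1 hp
  exact ⟨(p₁, p₂), ⟨hp₁, hp₂, (sub_eq_zero.1 hfst).symm⟩, ht.trans hsnd.ge⟩

end Duality

lemma isCompact_fiberPairs {E : Type*} [TopologicalSpace E] [T2Space E] {C₁ C₂ : Set (E × ℝ)}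
    (h₁ : IsCompact C₁) (h₂ : IsCompact C₂) : IsCompact (fiberPairs C₁ C₂) := by
  have hclosed : IsClosed {p : (E × ℝ) × (E × ℝ) | p.1.1 = p.2.1} :=
    isClosed_eq (by fun_prop) (by fun_prop)
  convert! (h₁.prod h₂).inter_right hclosed using 1
  ext p
  exact and_assoc.symm

section Indicators

variable {N : Type*}

/-- The indicator vector of a finite set. -/
noncomputable def indVec (J : Finset N) : N → ℝ :=
  (J : Set N).indicator 1

lemma indVec_of_mem {J : Finset N} {i : N} (hi : i ∈ J) : indVec J i = 1 :=
  Set.indicator_of_mem (mem_coe.2 hi) _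

lemma indVec_of_notMem {J : Finset N} {i : N} (hi : i ∉ J) : indVec J i = 0 :=
  Set.indicator_of_notMem (mt mem_coe.1 hi) _

lemma indVec_injective : Function.Injective (indVec (N := N)) := fun _ _ h =>
  coe_injective (Set.indicator_one_inj ℝ h)

lemma indVec_empty : indVec (∅ : Finset N) = 0 := by
  simp [indVec, Pi.zero_def]

variable [DecidableEq N]

lemma indVec_singleton (i : N) : indVec {i} = Pi.single i 1 := by
  ext j
  by_cases hj : j = i <;> simp [indVec, hj]

lemma indVec_sdiff_union {X I J : Finset N} (hI : I ⊆ X) (hJ : Disjoint X J) :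
    indVec (X \ I ∪ J) = indVec X - indVec I + indVec J := by
  ext i
  have hIX := @hI i
  have hXJ := @disjoint_left.1 hJ i
  by_cases hX : i ∈ X <;> by_cases hiI : i ∈ I <;> by_cases hiJ : i ∈ J <;>
    simp_all [indVec]

end Indicators

section GraphHull

variable {N : Type*}

/-- The convex hull, in `ℝ^N × ℝ`, of the graph of a set function `g` on `D`. Its upper boundary is
the concave closure of `g`. -/
def graphHull (D : Set (Finset N)) (g : Finset N → ℝ) : Set ((N → ℝ) × ℝ) :=
  convexHull ℝ ((fun J => (indVec J, g J)) '' D)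

variable {D : Set (Finset N)} {g : Finset N → ℝ} {q : (N → ℝ) × ℝ}

lemma convex_graphHull (D : Set (Finset N)) (g : Finset N → ℝ) : Convex ℝ (graphHull D g) :=
  convex_convexHull ℝ _

lemma isCompact_graphHull (hD : D.Finite) : IsCompact (graphHull D g) :=
  (hD.image _).isCompact_convexHull ℝ

lemma vertex_mem_graphHull {J : Finset N} (hJ : J ∈ D) : (indVec J, g J) ∈ graphHull D g :=
  subset_convexHull ℝ _ (Set.mem_image_of_mem _ hJ)

lemma apply_mem_Icc_of_mem_graphHull (hq : q ∈ graphHull D g) (i : N) :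
    q.1 i ∈ Set.Icc (0 : ℝ) 1 := by
  have hconv : Convex ℝ {p : (N → ℝ) × ℝ | p.1 i ∈ Set.Icc (0 : ℝ) 1} :=
    (convex_Icc 0 1).linear_preimage (LinearMap.proj i ∘ₗ LinearMap.fst ℝ (N → ℝ) ℝ)
  refine convexHull_min ?_ hconv hq
  rintro _ ⟨J, -, rfl⟩
  by_cases hi : i ∈ J <;> simp [indVec, hi]

/-- The vertex of `J` has positive weight in some representation of `q` as a convex combination of
vertices, expressed as: the hull can be prolonged beyond `q` from that vertex. -/
def Supports (D : Set (Finset N)) (g : Finset N → ℝ) (q : (N → ℝ) × ℝ) (J : Finset N) : Prop :=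
  J ∈ D ∧ q - (indVec J, g J) ∈ feasibleCone (graphHull D g) q

lemma exists_supports_avoiding (hq : q ∈ graphHull D g) {T : Set ((N → ℝ) × ℝ)}
    (hT : Convex ℝ T) (hqT : q ∉ T) : ∃ J, Supports D g q J ∧ (indVec J, g J) ∉ T := by
  obtain ⟨_, ⟨J, hJ, rfl⟩, hJT, hfeas⟩ := exists_notMem_sub_mem_feasibleCone hq hT hqT
  exact ⟨J, ⟨hJ, hfeas⟩, hJT⟩

lemma exists_supports_mem (hq : q ∈ graphHull D g) {i : N} (hi : 0 < q.1 i) :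
    ∃ J, Supports D g q J ∧ i ∈ J := by
  obtain ⟨J, hJ, hJi⟩ := exists_supports_avoiding hq
    ((convex_Iic 0).linear_preimage (LinearMap.proj i ∘ₗ LinearMap.fst ℝ (N → ℝ) ℝ)) hi.not_ge
  exact ⟨J, hJ, by_contra fun hiJ => hJi (indVec_of_notMem hiJ).le⟩

lemma exists_supports_notMem (hq : q ∈ graphHull D g) {i : N} (hi : q.1 i < 1) :
    ∃ J, Supports D g q J ∧ i ∉ J := by
  obtain ⟨J, hJ, hJi⟩ := exists_supports_avoiding hq
    ((convex_Ici 1).linear_preimage (LinearMap.proj i ∘ₗ LinearMap.fst ℝ (N → ℝ) ℝ)) hi.not_ge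
  exact ⟨J, hJ, fun hiJ => hJi (indVec_of_mem hiJ).ge⟩

open Filter Topology in
lemma Supports.exists_pos_mem_Icc {J : Finset N} (hJ : Supports D g q J) (hq : q ∈ graphHull D g)
    (i : N) : ∃ ε > 0, q.1 i + ε * (q.1 i - indVec J i) ∈ Set.Icc (0 : ℝ) 1 := by
  obtain ⟨ε, hmem, hε⟩ := ((eventually_add_smul_mem (convex_graphHull D g) hq hJ.2).and
    eventually_mem_nhdsWithin).exists
  exact ⟨ε, hε, apply_mem_Icc_of_mem_graphHull hmem i⟩

lemma Supports.pos_of_mem {J : Finset N} (hJ : Supports D g q J) (hq : q ∈ graphHull D g) {i : N}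
    (hi : i ∈ J) : 0 < q.1 i := by
  obtain ⟨ε, hε, hmem⟩ := hJ.exists_pos_mem_Icc hq i
  rw [indVec_of_mem hi] at hmem
  nlinarith [hmem.1]

lemma Supports.lt_one_of_notMem {J : Finset N} (hJ : Supports D g q J) (hq : q ∈ graphHull D g)
    {i : N} (hi : i ∉ J) : q.1 i < 1 := by
  obtain ⟨ε, hε, hmem⟩ := hJ.exists_pos_mem_Icc hq i
  rw [indVec_of_notMem hi] at hmem
  nlinarith [hmem.2]

lemma Supports.indVec_eq {J : Finset N} (hJ : Supports D g q J) (hq : q ∈ graphHull D g)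
    (hint : ∀ i, q.1 i ∉ Set.Ioo (0 : ℝ) 1) : indVec J = q.1 := by
  ext i
  have hIcc := apply_mem_Icc_of_mem_graphHull hq i
  by_cases hi : i ∈ J
  · rw [indVec_of_mem hi]
    have := hJ.pos_of_mem hq hi
    exact (hIcc.2.eq_of_not_lt fun hlt => hint i ⟨this, hlt⟩).symm
  · rw [indVec_of_notMem hi]
    have := hJ.lt_one_of_notMem hq hi
    exact hIcc.1.eq_of_not_lt fun hlt => hint i ⟨hlt, this⟩

lemma exists_eq_vertex_of_forall_notMem_Ioo (hq : q ∈ graphHull D g)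
    (hint : ∀ i, q.1 i ∉ Set.Ioo (0 : ℝ) 1) : ∃ J ∈ D, q = (indVec J, g J) := by
  obtain ⟨J, hJ, -⟩ := exists_supports_avoiding hq convex_empty (Set.notMem_empty q)
  refine ⟨J, hJ.1, ?_⟩
  by_contra hne
  obtain ⟨J', hJ', hne'⟩ := exists_supports_avoiding hq (convex_singleton (indVec J, g J)) hne
  have hJJ' : J' = J :=
    indVec_injective ((hJ'.indVec_eq hq hint).trans (hJ.indVec_eq hq hint).symm)
  exact hne' (by rw [hJJ']; rfl)

lemma finite_setOf_apply_mem_Ioo (hD : D.Finite) (hq : q ∈ graphHull D g) :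
    {i | q.1 i ∈ Set.Ioo (0 : ℝ) 1}.Finite := by
  refine (hD.biUnion fun J _ => J.finite_toSet).subset fun i hi => ?_
  obtain ⟨J, hJ, hiJ⟩ := exists_supports_mem hq hi.1
  exact Set.mem_biUnion hJ.1 hiJ

end GraphHull

section Rounding

variable {N : Type*} [DecidableEq N] {D : Set (Finset N)} {g : Finset N → ℝ} {q : (N → ℝ) × ℝ}

/-- The exchange property of an M♮-concave set function with effective domain `D` and values `g` on
`D`. The two kinds of exchange are unified: `i` moves against a set `T` of at most one element. -/
def ExchangeOn (D : Set (Finset N)) (g : Finset N → ℝ) : Prop :=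
  ∀ ⦃X⦄, X ∈ D → ∀ ⦃Y⦄, Y ∈ D → ∀ i ∈ X \ Y, ∃ T ⊆ Y \ X, #T ≤ 1 ∧
    X \ {i} ∪ T ∈ D ∧ Y \ T ∪ {i} ∈ D ∧ g X + g Y ≤ g (X \ {i} ∪ T) + g (Y \ T ∪ {i})

lemma Supports.sub_mem_reversibleDirs {Z Z' I J : Finset N} (hZ : Supports D g q Z)
    (hZ' : Supports D g q Z') (hI : I ⊆ Z \ Z') (hJ : J ⊆ Z' \ Z) (hW : Z \ I ∪ J ∈ D)
    (hW' : Z' \ J ∪ I ∈ D) (hle : g Z + g Z' ≤ g (Z \ I ∪ J) + g (Z' \ J ∪ I)) :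
    indVec I - indVec J ∈ reversibleDirs (graphHull D g) q := by
  have hI' := subset_sdiff.1 hI
  have hJ' := subset_sdiff.1 hJ
  refine ⟨g (Z' \ J ∪ I) - g Z', g (Z \ I ∪ J) - g Z, ?_, ?_, by linarith⟩
  · convert! add_mem (sub_mem_feasibleCone (vertex_mem_graphHull hW') q) hZ'.2 using 1
    rw [sub_add_sub_cancel, Prod.mk_sub_mk, indVec_sdiff_union hJ'.1 hI'.2.symm]
    congr 1
    abel
  · convert! add_mem (sub_mem_feasibleCone (vertex_mem_graphHull hW) q) hZ.2 using 1
    rw [sub_add_sub_cancel, Prod.mk_sub_mk, indVec_sdiff_union hI'.1 hJ'.2.symm]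
    congr 1
    abel

lemma ExchangeOn.pairsUp_reversibleDirs (hex : ExchangeOn D g) (hq : q ∈ graphHull D g) :
    PairsUp (fun i : {i // q.1 i ∈ Set.Ioo (0 : ℝ) 1} => (Pi.single i.1 1 : N → ℝ))
      (reversibleDirs (graphHull D g) q) := by
  rintro ⟨i, hi0, hi1⟩
  obtain ⟨Z, hZ, hiZ⟩ := exists_supports_mem hq hi0
  obtain ⟨Z', hZ', hiZ'⟩ := exists_supports_notMem hq hi1
  obtain ⟨T, hTsub, hTcard, hW, hW', hle⟩ := hex hZ.1 hZ'.1 i (mem_sdiff.2 ⟨hiZ, hiZ'⟩)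
  have hdir := hZ.sub_mem_reversibleDirs hZ'
    (singleton_subset_iff.2 (mem_sdiff.2 ⟨hiZ, hiZ'⟩)) hTsub hW hW' hle
  rw [indVec_singleton] at hdir
  rcases T.eq_empty_or_nonempty with rfl | hne
  · exact Or.inl (by simpa only [indVec_empty, sub_zero] using hdir)
  · obtain ⟨j, rfl⟩ := card_eq_one.1 (hTcard.antisymm hne.card_pos)
    obtain ⟨hjZ', hjZ⟩ := mem_sdiff.1 (singleton_subset_iff.1 hTsub)
    refine Or.inr ⟨⟨j, hZ'.pos_of_mem hq hjZ', hZ.lt_one_of_notMem hq hjZ⟩, ?_, ?_⟩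
    · exact fun h => ne_of_mem_of_not_mem hiZ hjZ (congrArg Subtype.val h).symm
    · rwa [indVec_singleton] at hdir

theorem ExchangeOn.exists_inter_of_mem_fiberPairs {D₁ D₂ : Set (Finset N)} {g₁ g₂ : Finset N → ℝ}
    (hex₁ : ExchangeOn D₁ g₁) (hex₂ : ExchangeOn D₂ g₂) (hD₁ : D₁.Finite) (hD₂ : D₂.Finite)
    {p : ((N → ℝ) × ℝ) × ((N → ℝ) × ℝ)}
    (hp : p ∈ fiberPairs (graphHull D₁ g₁) (graphHull D₂ g₂)) :
    ∃ K, K ∈ D₁ ∧ K ∈ D₂ ∧ p.1.2 + p.2.2 ≤ g₁ K + g₂ K := by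
  let height : StrongDual ℝ (((N → ℝ) × ℝ) × ((N → ℝ) × ℝ)) :=
    ContinuousLinearMap.snd ℝ (N → ℝ) ℝ ∘L
      (ContinuousLinearMap.fst ℝ _ _ + ContinuousLinearMap.snd ℝ _ _)
  obtain ⟨q, hq, hmax⟩ := exists_mem_extremePoints_forall_le
    (isCompact_fiberPairs (isCompact_graphHull (g := g₁) hD₁) (isCompact_graphHull (g := g₂) hD₂))
    ⟨p, hp⟩ height
  obtain ⟨hq₁, hq₂, hfib⟩ := hq.1
  have hdisj := disjoint_reversibleDirs (convex_graphHull D₁ g₁) (convex_graphHull D₂ g₂) hq hmax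
  have hint : ∀ i, q.1.1 i ∉ Set.Ioo (0 : ℝ) 1 := by
    by_contra! hfrac
    have : Finite {i // q.1.1 i ∈ Set.Ioo (0 : ℝ) 1} := finite_setOf_apply_mem_Ioo hD₁ hq₁
    have : Nonempty {i // q.1.1 i ∈ Set.Ioo (0 : ℝ) 1} := nonempty_subtype.2 hfrac
    refine PairsUp.not_disjoint ((Pi.linearIndependent_single_one N ℝ).comp Subtype.val
      Subtype.val_injective) (hex₁.pairsUp_reversibleDirs hq₁) ?_ hdisj
    rw [hfib]
    exact hex₂.pairsUp_reversibleDirs hq₂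
  obtain ⟨K, hK, hqK⟩ := exists_eq_vertex_of_forall_notMem_Ioo hq₁ hint
  obtain ⟨K', hK', hqK'⟩ := exists_eq_vertex_of_forall_notMem_Ioo hq₂ (hfib ▸ hint)
  obtain rfl : K = K' := indVec_injective (by simpa [hqK, hqK'] using hfib)
  refine ⟨K, hK, hK', (hmax p hp).trans_eq ?_⟩
  change q.1.2 + q.2.2 = _
  rw [hqK, hqK']

end Rounding

section MultipleExchange

variable {N : Type*} [DecidableEq N] {D : Set (Finset N)} {g : Finset N → ℝ} {X Y I : Finset N}

lemma ExchangeOn.add_linear (hex : ExchangeOn D g) (l : (N → ℝ) →ₗ[ℝ] ℝ) :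
    ExchangeOn D fun Z => g Z + l (indVec Z) := by
  intro X hX Y hY i hi
  obtain ⟨T, hT, hcard, hW, hW', hle⟩ := hex hX hY i hi
  refine ⟨T, hT, hcard, hW, hW', ?_⟩
  have hT' := subset_sdiff.1 hT
  have hi' := subset_sdiff.1 (singleton_subset_iff.2 hi)
  simp only [indVec_sdiff_union hi'.1 hT'.2.symm, indVec_sdiff_union hT'.1 hi'.2.symm, map_add,
    map_sub]
  linarith

lemma ExchangeOn.comp_union_left (hex : ExchangeOn D g) {A B : Finset N} (hAB : Disjoint A B) :
    ExchangeOn {J | J ⊆ B ∧ A ∪ J ∈ D} fun J => g (A ∪ J) := by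
  rintro J ⟨hJB, hJ⟩ J' ⟨hJB', hJ'⟩ i hi
  have hAB' := @disjoint_left.1 hAB
  obtain ⟨T, hT, hcard, hW, hW', hle⟩ := hex hJ hJ' i (by grind)
  have hswap : (A ∪ J) \ {i} ∪ T = A ∪ (J \ {i} ∪ T) := by grind
  have hswap' : (A ∪ J') \ T ∪ {i} = A ∪ (J' \ T ∪ {i}) := by grind
  rw [hswap] at hW hle
  rw [hswap'] at hW' hle
  exact ⟨T, by grind, hcard, ⟨by grind, hW⟩, ⟨by grind, hW'⟩, hle⟩

lemma ExchangeOn.comp_sdiff_union (hex : ExchangeOn D g) {B : Finset N} (hB : B ⊆ Y)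
    (hI : Disjoint I Y) : ExchangeOn {J | J ⊆ B ∧ Y \ J ∪ I ∈ D} fun J => g (Y \ J ∪ I) := by
  rintro J ⟨hJB, hJ⟩ J' ⟨hJB', hJ'⟩ i hi
  have hI' := @disjoint_left.1 hI
  obtain ⟨T, hT, hcard, hW, hW', hle⟩ := hex hJ' hJ i (by grind)
  have hswap : (Y \ J' ∪ I) \ {i} ∪ T = Y \ (J' \ T ∪ {i}) ∪ I := by grind
  have hswap' : (Y \ J ∪ I) \ T ∪ {i} = Y \ (J \ {i} ∪ T) ∪ I := by grind
  rw [hswap] at hW hle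
  rw [hswap'] at hW' hle
  exact ⟨T, by grind, hcard, ⟨by grind, hW'⟩, ⟨by grind, hW⟩, by linarith⟩

lemma ExchangeOn.exists_sdiff_singleton_union (hex : ExchangeOn D g) {P Q B J K : Finset N}
    (hPB : Disjoint P B) (hQP : Q ⊆ P) (hJ : J ⊆ B) (hK : K ⊆ B) (hPJ : P ∪ J ∈ D)
    (hQK : Q ∪ K ∈ D) {i : N} (hi : i ∈ P \ Q) :
    ∃ J' ⊆ B, ∃ K' ⊆ B, P \ {i} ∪ J' ∈ D ∧ Q ∪ {i} ∪ K' ∈ D ∧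
      g (P ∪ J) + g (Q ∪ K) ≤ g (P \ {i} ∪ J') + g (Q ∪ {i} ∪ K') := by
  have hPB' := @disjoint_left.1 hPB
  obtain ⟨T, hT, -, hZ, hW, hle⟩ := hex hPJ hQK i (by grind)
  have hZeq : (P ∪ J) \ {i} ∪ T = P \ {i} ∪ (J ∪ T) := by grind
  have hWeq : (Q ∪ K) \ T ∪ {i} = Q ∪ {i} ∪ K \ T := by grind
  rw [hZeq] at hZ hle
  rw [hWeq] at hW hle
  exact ⟨J ∪ T, by grind, K \ T, by grind, hZ, hW, hle⟩

lemma exists_union_mem_forall_le (g : Finset N → ℝ) {P B J : Finset N} (hJ : J ⊆ B)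
    (hPJ : P ∪ J ∈ D) :
    ∃ M ⊆ B, P ∪ M ∈ D ∧ ∀ K ⊆ B, P ∪ K ∈ D → g (P ∪ K) ≤ g (P ∪ M) := by
  have hfin : {K | K ⊆ B ∧ P ∪ K ∈ D}.Finite :=
    B.powerset.finite_toSet.subset fun K hK => mem_powerset.2 hK.1
  obtain ⟨M, ⟨hM, hPM⟩, hmax⟩ := Set.exists_max_image _ (fun K => g (P ∪ K)) hfin ⟨J, hJ, hPJ⟩
  exact ⟨M, hM, hPM, fun K hK hPK => hmax K ⟨hK, hPK⟩⟩

-- This is submodularity in `P` of the maximum of `g (P ∪ J)` over `J ⊆ B`.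
lemma ExchangeOn.exists_sdiff_union (hex : ExchangeOn D g) {P Q B J K : Finset N}
    (hPB : Disjoint P B) (hQP : Q ⊆ P) (hJ : J ⊆ B) (hK : K ⊆ B) (hPJ : P ∪ J ∈ D)
    (hQK : Q ∪ K ∈ D) (hI : I ⊆ P \ Q) :
    ∃ J' ⊆ B, ∃ K' ⊆ B, P \ I ∪ J' ∈ D ∧ Q ∪ I ∪ K' ∈ D ∧
      g (P ∪ J) + g (Q ∪ K) ≤ g (P \ I ∪ J') + g (Q ∪ I ∪ K') := by
  induction I using Finset.induction_on generalizing P J with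
  | empty => exact ⟨J, hJ, K, hK, by simpa using hPJ, by simpa using hQK, by simp⟩
  | insert i I hiI ih =>
    obtain ⟨hi, hI⟩ := insert_subset_iff.1 hI
    have hQP' : Q ⊆ P \ {i} := by grind
    have hI' : I ⊆ (P \ {i}) \ Q := by grind
    have hi' : i ∈ P \ (Q ∪ I) := by grind
    have hPeq : (P \ {i}) \ I = P \ insert i I := by grind
    have hQeq : Q ∪ I ∪ {i} = Q ∪ insert i I := by grind
    obtain ⟨J₀, hJ₀, -, -, hPJ₀, -⟩ := hex.exists_sdiff_singleton_union hPB hQP hJ hK hPJ hQK hi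
    obtain ⟨M, hM, hPM, hmax⟩ := exists_union_mem_forall_le g hJ₀ hPJ₀
    obtain ⟨J₁, hJ₁, K₁, hK₁, hPJ₁, hQK₁, hle₁⟩ :=
      ih (hPB.mono_left sdiff_subset) hQP' hM hPM hI'
    obtain ⟨J₂, hJ₂, K₂, hK₂, hPJ₂, hQK₂, hle₂⟩ := hex.exists_sdiff_singleton_union hPB
      (union_subset hQP (hI.trans sdiff_subset)) hJ hK₁ hPJ hQK₁ hi'
    rw [hPeq] at hPJ₁ hle₁
    rw [hQeq] at hQK₂ hle₂
    exact ⟨J₁, hJ₁, K₂, hK₂, hPJ₁, hQK₂, by linarith [hmax J₂ hJ₂ hPJ₂]⟩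

lemma ExchangeOn.unpaired_exchange (hex : ExchangeOn D g) (hX : X ∈ D) (hY : Y ∈ D)
    (hI : I ⊆ X \ Y) :
    ∃ J₁ ⊆ Y \ X, ∃ J₂ ⊆ Y \ X, X \ I ∪ J₁ ∈ D ∧ Y \ J₂ ∪ I ∈ D ∧
      g X + g Y ≤ g (X \ I ∪ J₁) + g (Y \ J₂ ∪ I) := by
  have hYeq : X ∩ Y ∪ Y \ X = Y := by grind
  obtain ⟨J, hJ, K, hK, hZ, hW, hle⟩ := hex.exists_sdiff_union (P := X) (Q := X ∩ Y) (I := I)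
    disjoint_sdiff inter_subset_left (empty_subset _) subset_rfl (by rwa [union_empty])
    (by rwa [hYeq]) (by grind)
  have hWeq : X ∩ Y ∪ I ∪ K = Y \ ((Y \ X) \ K) ∪ I := by grind
  rw [hWeq] at hW hle
  rw [union_empty, hYeq] at hle
  exact ⟨J, hJ, (Y \ X) \ K, sdiff_subset, hZ, hW, hle⟩

theorem ExchangeOn.multiple_exchange (hex : ExchangeOn D g) (hX : X ∈ D) (hY : Y ∈ D)
    (hI : I ⊆ X \ Y) :
    ∃ J ⊆ Y \ X, X \ I ∪ J ∈ D ∧ Y \ J ∪ I ∈ D ∧ g X + g Y ≤ g (X \ I ∪ J) + g (Y \ J ∪ I) := by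
  obtain ⟨hIX, hIY⟩ := subset_sdiff.1 hI
  have hfin (P : Finset N → Prop) : {J | J ⊆ Y \ X ∧ P J}.Finite :=
    (Y \ X).powerset.finite_toSet.subset fun J hJ => mem_powerset.2 hJ.1
  obtain ⟨p, hp, hle⟩ := exists_mem_fiberPairs_of_forall_dual
    (convex_graphHull {J | J ⊆ Y \ X ∧ X \ I ∪ J ∈ D} fun J => g (X \ I ∪ J))
    (convex_graphHull {J | J ⊆ Y \ X ∧ Y \ J ∪ I ∈ D} fun J => g (Y \ J ∪ I))
    (isCompact_graphHull (hfin _)) (isCompact_graphHull (hfin _)) (c := g X + g Y) fun l => by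
      obtain ⟨J₁, hJ₁, J₂, hJ₂, hZ, hW, hle⟩ :=
        (hex.add_linear (-l.toLinearMap)).unpaired_exchange hX hY hI
      refine ⟨_, vertex_mem_graphHull ⟨hJ₁, hZ⟩, _, vertex_mem_graphHull ⟨hJ₂, hW⟩, ?_⟩
      rw [indVec_sdiff_union hIX (subset_sdiff.1 hJ₁).2.symm,
        indVec_sdiff_union (subset_sdiff.1 hJ₂).1 hIY.symm] at hle
      simp only [LinearMap.neg_apply, ContinuousLinearMap.coe_coe, map_add, map_sub] at hle ⊢
      linarith
  obtain ⟨J, ⟨hJ, hZ⟩, ⟨-, hW⟩, hle'⟩ := ExchangeOn.exists_inter_of_mem_fiberPairs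
    (hex.comp_union_left (disjoint_sdiff.mono_left sdiff_subset))
    (hex.comp_sdiff_union sdiff_subset hIY) (hfin _) (hfin _) hp
  exact ⟨J, hJ, hZ, hW, hle.trans hle'⟩

end MultipleExchange

section WithBot

lemma add_le_add_iff_unbotD {a b c d : WithBot ℝ} (ha : a ≠ ⊥) (hb : b ≠ ⊥) :
    a + b ≤ c + d ↔
      c ≠ ⊥ ∧ d ≠ ⊥ ∧ a.unbotD 0 + b.unbotD 0 ≤ c.unbotD 0 + d.unbotD 0 := by
  lift a to ℝ using ha
  lift b to ℝ using hb
  induction c using WithBot.recBotCoe <;> induction d using WithBot.recBotCoe <;>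
    simp [← WithBot.coe_add]

variable {N : Type*} [DecidableEq N] {f : Finset N → WithBot ℝ}

lemma MExc.exists_card_le_one (hf : MExc f) {X Y : Finset N} {i : N} (hi : i ∈ X \ Y)
    (hX : f X ≠ ⊥) (hY : f Y ≠ ⊥) :
    ∃ T ⊆ Y \ X, #T ≤ 1 ∧ f X + f Y ≤ f (X \ {i} ∪ T) + f (Y \ T ∪ {i}) := by
  rcases le_max_iff.1 (hf X Y i hi) with hle | hle
  · refine ⟨∅, empty_subset _, by simp, hle.trans_eq ?_⟩
    congr 2 <;> grind
  · obtain ⟨j, hj, hle⟩ := (Finset.le_sup_iff (by simp [bot_lt_iff_ne_bot, hX, hY])).1 hle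
    refine ⟨{j}, singleton_subset_iff.2 hj, (card_singleton j).le, hle.trans_eq ?_⟩
    congr 2 <;> grind

lemma MExc.exchangeOn (hf : MExc f) : ExchangeOn {X | f X ≠ ⊥} fun X => (f X).unbotD 0 := by
  intro X hX Y hY i hi
  obtain ⟨T, hT, hcard, hle⟩ := hf.exists_card_le_one hi hX hY
  exact ⟨T, hT, hcard, (add_le_add_iff_unbotD hX hY).1 hle⟩

end WithBot

theorem mnat_concave_multiple_exchange_general {N : Type*} [DecidableEq N]
    (f : Finset N → WithBot ℝ) (hf : MExc f) : MExcM f := by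
  intro X Y I hI
  by_cases hXY : f X = ⊥ ∨ f Y = ⊥
  · exact ⟨∅, empty_subset _, by rw [WithBot.add_eq_bot.2 hXY]; exact bot_le⟩
  · obtain ⟨hX, hY⟩ := not_or.1 hXY
    obtain ⟨J, hJ, hle⟩ := hf.exchangeOn.multiple_exchange hX hY hI
    exact ⟨J, hJ, (add_le_add_iff_unbotD hX hY).2 hle⟩

theorem mnat_concave_multiple_exchange {N : Type*} [Fintype N] [DecidableEq N]
    (f : Finset N → WithBot ℝ) (hdom : ∃ X, f X ≠ ⊥) (hf : MExc f) :
    MExcM f :=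
  mnat_concave_multiple_exchange_general f hf
end

section
/- For a set function f : 2^N → ℝ ∪ {-∞} with dom f ≠ ∅, the multiple exchange property (M♮-EXC_m) implies the exchange property (M♮-EXC). -/
open Finset

/-!
Replace `f` by its Lipschitz envelope with a large constant: the envelope is finite everywhere and
inherits the multiple exchange property. For a finite function that property yields two local
inequalities, submodularity and a triangle condition: after subtracting the values at the sets
`insert x C`, the values at `insert x (insert y C)` form an ultrametric. Ultrametrics satisfy the
four-point condition, which is the missing exchange inequality at distance four, and the exchange
property follows from its local cases by moving `Y` towards `X`. When the Lipschitz constant is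
large enough, the exchange found for the envelope is one for `f`.
-/

theorem eq_empty_or_eq_singleton_of_card_le_one {N : Type*} {J : Finset N} (hJ : #J ≤ 1) :
    J = ∅ ∨ ∃ j, J = {j} :=
  (Nat.le_one_iff_eq_zero_or_eq_one.1 hJ).imp card_eq_zero.1 card_eq_one.1

section MultipleExchange

open scoped symmDiff

variable {N : Type*} [DecidableEq N]

section LocalExchange

variable {α : Type*} [AddCommGroup α] [LinearOrder α] [IsOrderedAddMonoid α]

/-- The local exchange conditions for finite set functions: the exchange property between
`C ∪ {x, y}` and `C`, and between `C ∪ {x, y}` and `C ∪ {z}`. By a theorem of Reijnierse,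
van Gellekom and Potters they characterize M♮-concavity of finite set functions. -/
structure IsLocallyMNatConcave (g : Finset N → α) : Prop where
  submodular : ∀ (C : Finset N) (x y : N), x ∉ C → y ∉ C → x ≠ y →
    g (insert x (insert y C)) + g C ≤ g (insert x C) + g (insert y C)
  triangle : ∀ (C : Finset N) (x y z : N), x ∉ C → y ∉ C → z ∉ C → x ≠ y → x ≠ z → y ≠ z →
    g (insert x (insert y C)) + g (insert z C) ≤
      max (g (insert x (insert z C)) + g (insert y C))
        (g (insert y (insert z C)) + g (insert x C))

theorem add_le_max_add_of_le_max {xy xz xw yz yw zw : α} (hxyz : xy ≤ max xz yz)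
    (hxyw : xy ≤ max xw yw) (hzwx : zw ≤ max xz xw) (hzwy : zw ≤ max yz yw) :
    xy + zw ≤ max (xz + yw) (xw + yz) := by
  simp only [le_max_iff] at *
  grind

namespace IsLocallyMNatConcave

variable {g : Finset N → α}

theorem four_point (hg : IsLocallyMNatConcave g) {C : Finset N} {x y z w : N}
    (hx : x ∉ C) (hy : y ∉ C) (hz : z ∉ C) (hw : w ∉ C) (hxy : x ≠ y) (hxz : x ≠ z)
    (hxw : x ≠ w) (hyz : y ≠ z) (hyw : y ≠ w) (hzw : z ≠ w) :
    g (insert x (insert y C)) + g (insert z (insert w C)) ≤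
      max (g (insert x (insert z C)) + g (insert y (insert w C)))
        (g (insert x (insert w C)) + g (insert y (insert z C))) := by
  let d (p q : N) : α := g (insert p (insert q C)) - g (insert p C) - g (insert q C)
  have d_comm (p q : N) : d p q = d q p := by
    simp only [d, insert_comm p q, sub_right_comm]
  have ultrametric {p q r : N} (hp : p ∉ C) (hq : q ∉ C) (hr : r ∉ C) (hpq : p ≠ q)
      (hpr : p ≠ r) (hqr : q ≠ r) : d p q ≤ max (d p r) (d q r) := by
    have := hg.triangle C p q r hp hq hr hpq hpr hqr
    grind
  have := add_le_max_add_of_le_max (ultrametric hx hy hz hxy hxz hyz)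
    (ultrametric hx hy hw hxy hxw hyw)
    (d_comm x z ▸ d_comm x w ▸ ultrametric hz hw hx hzw hxz.symm hxw.symm)
    (d_comm y z ▸ d_comm y w ▸ ultrametric hz hw hy hzw hyz.symm hyw.symm)
  grind

theorem exchange_of_card_le_one (hg : IsLocallyMNatConcave g) {Y J K : Finset N} {u w : N}
    (hu : u ∉ Y) (hw : w ∉ Y) (huw : u ≠ w) (hJY : J ⊆ Y) (hKY : K ⊆ Y) (hJK : Disjoint J K)
    (hJ : #J ≤ 1) (hK : #K ≤ 1) :
    g (insert u (insert w (Y \ (J ∪ K)))) + g Y ≤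
      max (g (insert u (Y \ J)) + g (insert w (Y \ K)))
        (g (insert u (Y \ K)) + g (insert w (Y \ J))) := by
  obtain ⟨C, hC⟩ : ∃ C, C = Y \ (J ∪ K) := ⟨_, rfl⟩
  rw [disjoint_left] at hJK
  obtain ⟨hYJ, hYK, hY⟩ : Y \ J = K ∪ C ∧ Y \ K = J ∪ C ∧ Y = J ∪ (K ∪ C) := by
    clear hJ hK
    grind
  rw [hYJ, hYK, ← hC, hY]
  obtain rfl | ⟨j, rfl⟩ := eq_empty_or_eq_singleton_of_card_le_one hJ <;>
    obtain rfl | ⟨k, rfl⟩ := eq_empty_or_eq_singleton_of_card_le_one hK <;>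
    simp only [empty_union, singleton_union]
  · simpa only [max_self] using hg.submodular C u w (by grind) (by grind) huw
  · have := hg.triangle C u w k (by grind) (by grind) (by grind) huw (by grind) (by grind)
    grind
  · have := hg.triangle C u w j (by grind) (by grind) (by grind) huw (by grind) (by grind)
    grind
  · have := hg.four_point (C := C) (x := u) (y := w) (z := j) (w := k) (by grind) (by grind)
      (by grind) (by grind) huw (by grind) (by grind) (by grind) (by grind) (by grind)
    grind

theorem exists_exchange_of_ssubset (hg : IsLocallyMNatConcave g) {C Y : Finset N} {i : N}
    (hCY : C ⊂ Y) (hi : i ∉ Y) :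
    ∃ v ∈ Y \ C, g (insert i C) + g Y ≤ g (insert v C) + g (insert i (Y.erase v)) := by
  induction Y using Finset.strongInduction with
  | H Y ih =>
  obtain ⟨v₀, hv₀, hmax⟩ := exists_max_image (Y \ C) (fun v => g (insert v C) + g (Y.erase v))
    (sdiff_nonempty.2 hCY.2)
  obtain ⟨hv₀Y, hv₀C⟩ := mem_sdiff.1 hv₀
  obtain hC | hC := (subset_erase.2 ⟨hCY.1, hv₀C⟩).eq_or_ssubset
  · exact ⟨v₀, hv₀, by rw [hC, insert_erase hv₀Y, add_comm]⟩
  obtain ⟨v, hv, hle⟩ := ih _ (erase_ssubset hv₀Y) hC (by simp [hi])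
  have hvY : v ∈ Y \ C := by grind
  have hmaxv := hmax v hvY
  clear hmax ih
  have htri := hg.triangle ((Y.erase v₀).erase v) v v₀ i (by grind) (by grind) (by grind)
    (by grind) (by grind) (by grind)
  have hY : insert v (insert v₀ ((Y.erase v₀).erase v)) = Y := by grind
  have hYv₀ : insert v ((Y.erase v₀).erase v) = Y.erase v₀ := by grind
  have hYv : insert v₀ ((Y.erase v₀).erase v) = Y.erase v := by grind
  rw [insert_comm v i, insert_comm v₀ i, hY, hYv₀, hYv] at htri
  obtain h | h := le_max_iff.1 htri
  · exact ⟨v₀, hv₀, by grind⟩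
  · exact ⟨v, hvY, by grind⟩

theorem exists_exchange (hg : IsLocallyMNatConcave g) {X Y : Finset N} {i : N}
    (hi : i ∈ X \ Y) :
    ∃ J ⊆ Y \ X, #J ≤ 1 ∧ g X + g Y ≤ g (X.erase i ∪ J) + g (insert i (Y \ J)) := by
  induction hD : X \ Y using Finset.strongInduction generalizing Y with
  | H D ih =>
  obtain ⟨hiX, hiY⟩ := mem_sdiff.1 hi
  by_cases hXY : X.erase i ⊆ Y
  · obtain rfl | hXY := hXY.eq_or_ssubset
    · exact ⟨∅, by simp, by simp, by simp [insert_erase hiX, add_comm]⟩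
    obtain ⟨v, hv, hle⟩ := hg.exists_exchange_of_ssubset hXY hiY
    refine ⟨{v}, by grind, by simp, ?_⟩
    rwa [insert_erase hiX, ← union_singleton, ← sdiff_singleton_eq_erase v] at hle
  obtain ⟨u, hu, huY⟩ := not_subset.1 hXY
  obtain ⟨hui, huX⟩ := mem_erase.1 hu
  -- Maximality lets `J` compete with the set `K` found for `insert u (Y \ J)`: the two alternatives
  -- of the local exchange make `J` or `K` work for `Y`.
  obtain ⟨J, hJ, hmax⟩ := exists_max_image {J ∈ (Y \ X).powerset | #J ≤ 1}
    (fun J => g (X.erase i ∪ J) + g (insert u (Y \ J))) ⟨∅, by simp⟩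
  simp only [mem_filter, mem_powerset] at hJ hmax
  obtain ⟨hJY, hJ⟩ := hJ
  have hlt : X \ insert u (Y \ J) ⊂ D := by
    rw [← hD, ssubset_iff_of_subset (by grind)]
    exact ⟨u, mem_sdiff.2 ⟨huX, huY⟩, by simp⟩
  obtain ⟨K, hKuJ, hK, hle⟩ := ih _ hlt (by grind) rfl
  have hKY : K ⊆ Y \ X := by grind
  have hJK : Disjoint J K := by
    rw [disjoint_right]; grind
  have hmaxK := hmax K ⟨hKY, hK⟩
  have hloc := hg.exchange_of_card_le_one hiY huY hui.symm (hJY.trans sdiff_subset)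
    (hKY.trans sdiff_subset) hJK hJ hK
  clear ih hmax hJK
  have hYJK : insert u (Y \ J) \ K = insert u (Y \ (J ∪ K)) := by
    rw [insert_sdiff_of_notMem _ (by grind), sdiff_sdiff_left, sup_eq_union]
  rw [hYJK] at hle
  obtain h | h := le_max_iff.1 hloc
  · exact ⟨J, hJY, hJ, by grind⟩
  · exact ⟨K, hKY, hK, by grind⟩

end IsLocallyMNatConcave

end LocalExchange

theorem MExcM.isLocallyMNatConcave {g : Finset N → ℝ}
    (hg : MExcM fun A => (g A : WithBot ℝ)) : IsLocallyMNatConcave g where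
  submodular C x y hx _ hxy := by
    obtain ⟨J, hJ, hle⟩ := hg (insert x (insert y C)) C {x} (by grind)
    obtain rfl : J = ∅ := by grind
    beta_reduce at hle
    have hyC : insert x (insert y C) \ {x} = insert y C := by grind
    rw [union_empty, sdiff_empty, union_singleton, hyC,
      add_comm (g (insert y C) : WithBot ℝ)] at hle
    exact_mod_cast hle
  triangle C x y z hx _ hz hxy hxz _ := by
    obtain ⟨J, hJ, hle⟩ := hg (insert x (insert y C)) (insert z C) {x} (by grind)
    beta_reduce at hle
    have hyC : insert x (insert y C) \ {x} = insert y C := by grind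
    have hzC : insert z C \ {z} = C := by grind
    have hJz : J ⊆ {z} := hJ.trans (by grind)
    obtain rfl | rfl := subset_singleton_iff.1 hJz
    · rw [union_empty, sdiff_empty, union_singleton, hyC,
        add_comm (g (insert y C) : WithBot ℝ)] at hle
      exact le_max_of_le_left (by exact_mod_cast hle)
    · rw [hyC, union_singleton, union_singleton, insert_comm z y, hzC] at hle
      exact le_max_of_le_right (by exact_mod_cast hle)

theorem card_symmDiff_exchange_le {X Y Z W I J : Finset N} (hI : I ⊆ X \ Y) (hJ : J ⊆ W \ Z) :
    #((X \ I ∪ J ∩ (Y \ X)) ∆ (Z \ (I ∩ (Z \ W)) ∪ J)) +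
      #((Y \ (J ∩ (Y \ X)) ∪ I) ∆ (W \ J ∪ I ∩ (Z \ W))) ≤ #(X ∆ Z) + #(Y ∆ W) := by
  rw [← card_union_add_card_inter, ← card_union_add_card_inter (X ∆ Z)]
  refine add_le_add (card_le_card fun t => ?_) (card_le_card fun t => ?_) <;>
  · have hIt := @hI t
    have hJt := @hJ t
    simp only [mem_union, mem_inter, mem_symmDiff, mem_sdiff] at hIt hJt ⊢
    grind only

/-- The Pasch–Hausdorff envelope with constant `K` of `f` on the subsets of `U`, for the distance
`#(A ∆ Z)`: for `0 ≤ K`, the least `K`-Lipschitz function above `f` on these subsets. Confining `Z`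
to `U` makes the supremum a maximum also when `N` is infinite. -/
def lipschitzEnvelope (f : Finset N → WithBot ℝ) (U : Finset N) (K : ℝ) (A : Finset N) :
    WithBot ℝ :=
  U.powerset.sup fun Z => f Z + ((-(K * #(A ∆ Z)) : ℝ) : WithBot ℝ)

variable {f : Finset N → WithBot ℝ} {U A Z : Finset N} {K M : ℝ}

theorem add_le_lipschitzEnvelope (hZ : Z ⊆ U) :
    f Z + ((-(K * #(A ∆ Z)) : ℝ) : WithBot ℝ) ≤ lipschitzEnvelope f U K A :=
  le_sup (f := fun Z => f Z + ((-(K * #(A ∆ Z)) : ℝ) : WithBot ℝ)) (mem_powerset.2 hZ)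

theorem le_lipschitzEnvelope (hA : A ⊆ U) : f A ≤ lipschitzEnvelope f U K A := by
  simpa using add_le_lipschitzEnvelope (f := f) (K := K) (A := A) hA

theorem lipschitzEnvelope_ne_bot (hZ : Z ⊆ U) (hfZ : f Z ≠ ⊥) :
    lipschitzEnvelope f U K A ≠ ⊥ :=
  ne_bot_of_le_ne_bot (WithBot.add_ne_bot.2 ⟨hfZ, WithBot.coe_ne_bot⟩)
    (add_le_lipschitzEnvelope hZ)

theorem exists_eq_lipschitzEnvelope (f : Finset N → WithBot ℝ) (U : Finset N) (K : ℝ)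
    (A : Finset N) : ∃ Z ⊆ U,
      lipschitzEnvelope f U K A = f Z + ((-(K * #(A ∆ Z)) : ℝ) : WithBot ℝ) := by
  simpa only [mem_powerset, lipschitzEnvelope] using
    exists_mem_eq_sup U.powerset (powerset_nonempty U)
      fun Z => f Z + ((-(K * #(A ∆ Z)) : ℝ) : WithBot ℝ)

theorem lipschitzEnvelope_le (hK : 0 ≤ K) (hM : ∀ Z ⊆ U, f Z ≤ M) :
    lipschitzEnvelope f U K A ≤ M := by
  obtain ⟨Z, hZ, hA⟩ := exists_eq_lipschitzEnvelope f U K A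
  rw [hA, ← add_zero (M : WithBot ℝ)]
  gcongr
  · exact hM Z hZ
  · exact_mod_cast neg_nonpos.2 (by positivity)

theorem lipschitzEnvelope_le_self_or_le_sub (hK : 0 ≤ K) (hM : ∀ Z ⊆ U, f Z ≤ M) :
    lipschitzEnvelope f U K A ≤ f A ∨ lipschitzEnvelope f U K A ≤ (M - K : ℝ) := by
  obtain ⟨Z, hZ, hA⟩ := exists_eq_lipschitzEnvelope f U K A
  rw [hA]
  obtain rfl | hAZ := eq_or_ne A Z
  · simp
  have hcard : (1 : ℝ) ≤ #(A ∆ Z) := by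
    exact_mod_cast card_pos.2 (nonempty_iff_ne_empty.2 (mt symmDiff_eq_bot.1 hAZ))
  right
  rw [sub_eq_add_neg, WithBot.coe_add]
  gcongr
  · exact hM Z hZ
  · exact_mod_cast neg_le_neg (le_mul_of_one_le_right hK hcard)

theorem exists_lipschitzEnvelope_reflects_le (f : Finset N → WithBot ℝ) (U : Finset N) (c : ℝ) :
    ∃ K, 0 ≤ K ∧ ∀ A B, c ≤ lipschitzEnvelope f U K A + lipschitzEnvelope f U K B →
      c ≤ f A + f B := by
  obtain ⟨M, hM⟩ : ∃ M : ℝ, ∀ Z ⊆ U, f Z ≤ M :=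
    ⟨(U.powerset.sup f).unbotD 0, fun Z hZ =>
      (le_sup (mem_powerset.2 hZ)).trans (WithBot.le_coe_unbotD _ _)⟩
  obtain ⟨K, hK⟩ := exists_gt (max 0 (M + M - c))
  obtain ⟨hK₀, hKc⟩ := max_lt_iff.1 hK
  have not_le {a b : WithBot ℝ} (ha : a ≤ (M - K : ℝ)) (hb : b ≤ M) : ¬ c ≤ a + b := by
    intro h
    have : c ≤ M - K + M := by exact_mod_cast h.trans (add_le_add ha hb)
    linarith
  refine ⟨K, hK₀.le, fun A B h => ?_⟩
  obtain hA | hA := lipschitzEnvelope_le_self_or_le_sub (A := A) hK₀.le hM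
  · obtain hB | hB := lipschitzEnvelope_le_self_or_le_sub (A := B) hK₀.le hM
    · exact h.trans (add_le_add hA hB)
    · exact absurd (add_comm (lipschitzEnvelope f U K A) _ ▸ h)
        (not_le hB (lipschitzEnvelope_le hK₀.le hM))
  · exact absurd h (not_le hA (lipschitzEnvelope_le hK₀.le hM))

theorem mExcM_lipschitzEnvelope (hf : MExcM f) (U : Finset N) (hK : 0 ≤ K) :
    MExcM (lipschitzEnvelope f U K) := by
  intro X Y I hI
  obtain ⟨Z, hZ, hX⟩ := exists_eq_lipschitzEnvelope f U K X
  obtain ⟨W, hW, hY⟩ := exists_eq_lipschitzEnvelope f U K Y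
  obtain ⟨J, hJ, hle⟩ := hf Z W (I ∩ (Z \ W)) inter_subset_right
  have hcard : (#((X \ I ∪ J ∩ (Y \ X)) ∆ (Z \ (I ∩ (Z \ W)) ∪ J)) : ℝ) +
      #((Y \ (J ∩ (Y \ X)) ∪ I) ∆ (W \ J ∪ I ∩ (Z \ W))) ≤ #(X ∆ Z) + #(Y ∆ W) := by
    exact_mod_cast card_symmDiff_exchange_le hI hJ
  refine ⟨J ∩ (Y \ X), inter_subset_right, ?_⟩
  rw [hX, hY, add_add_add_comm, ← WithBot.coe_add]
  refine (add_le_add hle ?_).trans ((add_add_add_comm _ _ _ _).trans_le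
    (add_le_add (add_le_lipschitzEnvelope ?_) (add_le_lipschitzEnvelope ?_)))
  · rw [← WithBot.coe_add, WithBot.coe_le_coe]
    linarith [mul_le_mul_of_nonneg_left hcard hK]
  · grind
  · grind

theorem MExcM.exists_exchange (hf : MExcM f) {X Y : Finset N} {i : N} (hi : i ∈ X \ Y) :
    ∃ J ⊆ Y \ X, #J ≤ 1 ∧ f X + f Y ≤ f (X.erase i ∪ J) + f (insert i (Y \ J)) := by
  by_cases hXY : f X + f Y = ⊥
  · exact ⟨∅, by simp, by simp, by simp [hXY]⟩
  obtain ⟨c, hc⟩ := WithBot.ne_bot_iff_exists.1 hXY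
  obtain ⟨K, hK, reflects_le⟩ := exists_lipschitzEnvelope_reflects_le f (X ∪ Y) c
  have hfin (A : Finset N) : ∃ r : ℝ, r = lipschitzEnvelope f (X ∪ Y) K A :=
    WithBot.ne_bot_iff_exists.1
      (lipschitzEnvelope_ne_bot subset_union_left (WithBot.add_ne_bot.1 hXY).1)
  choose g hg using hfin
  have hgM : MExcM fun A => (g A : WithBot ℝ) := by
    simpa only [hg] using mExcM_lipschitzEnvelope hf (X ∪ Y) hK
  obtain ⟨J, hJ, hJ₁, hle⟩ := hgM.isLocallyMNatConcave.exists_exchange hi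
  refine ⟨J, hJ, hJ₁, hc ▸ reflects_le _ _ ?_⟩
  calc (c : WithBot ℝ) = f X + f Y := hc
    _ ≤ g X + g Y := by
      rw [hg, hg]
      exact add_le_add (le_lipschitzEnvelope subset_union_left)
        (le_lipschitzEnvelope subset_union_right)
    _ ≤ g (X.erase i ∪ J) + g (insert i (Y \ J)) := by exact_mod_cast hle
    _ = _ := by rw [hg, hg]

end MultipleExchange

theorem multiple_exchange_implies_exchange_general {N : Type*} [DecidableEq N]
    (f : Finset N → WithBot ℝ) (hf : MExcM f) : MExc f := by
  intro X Y i hi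
  obtain ⟨J, hJ, hJ₁, hle⟩ := hf.exists_exchange hi
  obtain rfl | ⟨j, rfl⟩ := eq_empty_or_eq_singleton_of_card_le_one hJ₁
  · exact le_max_of_le_left (by simpa using hle)
  have hj : j ∈ Y \ X := singleton_subset_iff.1 hJ
  have hji : j ≠ i := by grind
  refine le_max_of_le_right (hle.trans ?_)
  rw [union_singleton, ← erase_eq, ← erase_insert_of_ne hji.symm]
  exact le_sup (f := fun j => f (insert j (X.erase i)) + f ((insert i Y).erase j)) hj

theorem multiple_exchange_implies_exchange {N : Type*} [Fintype N] [DecidableEq N]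
    (f : Finset N → WithBot ℝ) (hdom : ∃ X, f X ≠ ⊥) (hf : MExcM f) :
    MExc f :=
  multiple_exchange_implies_exchange_general f hf
end

section
/- A set function f : 2^N → ℝ ∪ {-∞} with dom f ≠ ∅ is M♮-concave if and only if it has the multiple exchange property (M♮-EXC_m). -/
open Finset

/-!
A penalty for changing the membership of elements in the argument approximates `f` by everywhere
finite functions with the same exchange property, which are exact on the values that matter for a
given exchange; so `f` may be assumed to be finite.

Multiple exchange yields the local exchange inequalities on sets that differ in at most four
elements. From them, single exchange follows by induction on `#(X \ Y)`: one returns an element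
`j` of `X \ Y` to `Y` in the best possible way, exchanges `i` with the resulting set, and swaps the
roles of the two exchanged sets by a local inequality where needed.

Conversely, let `X` and `Y` be disjoint and `I ⊆ X`. An exchange `J` for `I` divides the goods `Y`
between two buyers with the valuations `A ↦ f (X \ I ∪ A)` and `A ↦ f (I ∪ A)`. Single exchange is
preserved under maximization over the membership of some elements, so it makes the indirect
utilities jointly submodular in the prices and the acquired elements (L♮-convexity). By induction
on `Y` this provides prices that support an optimal division, and at these prices submodularity
bounds `f X + f Y` by the value of the division.
-/

theorem card_le_one_iff_eq_empty_or_singleton {N : Type*} {E : Finset N} :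
    #E ≤ 1 ↔ E = ∅ ∨ ∃ j, E = {j} := by
  rw [Nat.le_one_iff_eq_zero_or_eq_one, card_eq_zero, card_eq_one]

/-- The common generalization of (M♮-EXC), which is the case `m = 1`, and of (M♮-EXC_m), which is
the case `m = ⊤`: any set of at most `m` elements can be exchanged for at most `m` elements. -/
def HasExchange {N R : Type*} [DecidableEq N] [Add R] [LE R] (m : ℕ∞) (f : Finset N → R) : Prop :=
  ∀ X Y : Finset N, ∀ I ⊆ X \ Y, (#I : ℕ∞) ≤ m → ∃ J ⊆ Y \ X, (#J : ℕ∞) ≤ m ∧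
    f X + f Y ≤ f (X \ I ∪ J) + f (Y \ J ∪ I)

section Exchange

variable {N R : Type*} [DecidableEq N] {m : ℕ∞}

theorem hasExchange_top_iff [Add R] [LE R] {f : Finset N → R} :
    HasExchange ⊤ f ↔ ∀ X Y : Finset N, ∀ I ⊆ X \ Y, ∃ J ⊆ Y \ X,
      f X + f Y ≤ f (X \ I ∪ J) + f (Y \ J ∪ I) := by
  simp [HasExchange]

theorem hasExchange_one_iff [Add R] [Preorder R] {f : Finset N → R} :
    HasExchange 1 f ↔ ∀ X Y : Finset N, ∀ i ∈ X \ Y, ∃ E ⊆ Y \ X, #E ≤ 1 ∧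
      f X + f Y ≤ f (X.erase i ∪ E) + f (insert i Y \ E) := by
  have insert_sdiff_eq {Y E : Finset N} {i : N} (hi : i ∉ E) :
      insert i Y \ E = Y \ E ∪ {i} := by grind
  constructor
  · intro h X Y i hi
    obtain ⟨E, hE, hE1, hf⟩ := h X Y {i} (by simpa using hi) (by simp)
    rw [sdiff_singleton_eq_erase, ← insert_sdiff_eq (by grind)] at hf
    exact ⟨E, hE, by exact_mod_cast hE1, hf⟩
  · intro h X Y I hI hI1
    replace hI1 : #I ≤ 1 := by exact_mod_cast hI1
    rcases card_le_one_iff_eq_empty_or_singleton.1 hI1 with rfl | ⟨i, rfl⟩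
    · exact ⟨∅, by simp, by simp, by simp⟩
    · obtain ⟨E, hE, hE1, hf⟩ := h X Y i (by simpa using hI)
      rw [← sdiff_singleton_eq_erase, insert_sdiff_eq (by grind)] at hf
      exact ⟨E, hE, by exact_mod_cast hE1, hf⟩

theorem HasExchange.coe_withBot_iff [Add R] [LE R] {v : Finset N → R} :
    HasExchange m (fun X => (v X : WithBot R)) ↔ HasExchange m v := by
  simp only [HasExchange, ← WithBot.coe_add, WithBot.coe_le_coe]

theorem HasExchange.contract [Add R] [LE R] {f : Finset N → R} (h : HasExchange m f)
    (Z : Finset N) : HasExchange m fun A => f (Z ∪ A) := by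
  intro X Y I hI hIm
  obtain ⟨J, hJ, hJm, hf⟩ := h (Z ∪ X) (Z ∪ Y) (I \ Z) (by grind)
    ((Nat.cast_le.2 (card_le_card sdiff_subset)).trans hIm)
  have hX : (Z ∪ X) \ (I \ Z) ∪ J = Z ∪ (X \ I ∪ J) := by grind
  have hY : (Z ∪ Y) \ J ∪ I \ Z = Z ∪ (Y \ J ∪ I) := by grind
  exact ⟨J, by grind, hJm, by rwa [hX, hY] at hf⟩

theorem HasExchange.restrict [Add R] [LE R] {f : Finset N → R} (h : HasExchange m f)
    (U : Finset N) : HasExchange m fun A => f (A ∩ U) := by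
  intro X Y I hI hIm
  obtain ⟨J, hJ, hJm, hf⟩ := h (X ∩ U) (Y ∩ U) (I ∩ U) (by grind)
    ((Nat.cast_le.2 (card_le_card inter_subset_left)).trans hIm)
  have hX : (X ∩ U) \ (I ∩ U) ∪ J = (X \ I ∪ J) ∩ U := by grind
  have hY : (Y ∩ U) \ J ∪ I ∩ U = (Y \ J ∪ I) ∩ U := by grind
  exact ⟨J, by grind, hJm, by rwa [hX, hY] at hf⟩

theorem HasExchange.add_le_erase_add_insert [Add R] [LE R] {f : Finset N → R}
    (h : HasExchange m f) (hm : 1 ≤ m) {X Y : Finset N} {i : N} (hYX : Y ⊆ X) (hi : i ∈ X \ Y) :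
    f X + f Y ≤ f (X.erase i) + f (insert i Y) := by
  obtain ⟨J, hJ, -, hf⟩ := h X Y {i} (by simpa using hi) (by simpa using hm)
  obtain rfl : J = ∅ := by rwa [sdiff_eq_empty_iff_subset.2 hYX, subset_empty] at hJ
  have hiY : Y \ ∅ ∪ {i} = insert i Y := by grind
  rwa [sdiff_singleton_eq_erase, union_empty, hiY] at hf

end Exchange

section KernelTransform

variable {N S : Type*} [DecidableEq N] [AddCommMonoid S] [LinearOrder S] {m : ℕ∞}

/-- The value of `f` after the membership in `X` of every element `x` of `F` may have been changed,
where passing from `p := x ∈ X` to `q` earns `k x p q`. -/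
def kernelTransform (f : Finset N → S) (F : Finset N) (k : N → Bool → Bool → S) (X : Finset N) :
    S :=
  F.powerset.sup' ⟨∅, empty_mem_powerset F⟩ fun A => f (X \ F ∪ A) + ∑ x ∈ F, k x (x ∈ X) (x ∈ A)

variable {f : Finset N → S} {F : Finset N} {k : N → Bool → Bool → S}

theorem le_kernelTransform {A : Finset N} (hA : A ⊆ F) (X : Finset N) :
    f (X \ F ∪ A) + ∑ x ∈ F, k x (x ∈ X) (x ∈ A) ≤ kernelTransform f F k X :=
  le_sup' (fun A => f (X \ F ∪ A) + ∑ x ∈ F, k x (x ∈ X) (x ∈ A)) (mem_powerset.2 hA)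

theorem exists_eq_kernelTransform (f : Finset N → S) (F : Finset N) (k : N → Bool → Bool → S)
    (X : Finset N) :
    ∃ A ⊆ F, kernelTransform f F k X = f (X \ F ∪ A) + ∑ x ∈ F, k x (x ∈ X) (x ∈ A) := by
  obtain ⟨A, hA, h⟩ := exists_mem_eq_sup' (s := F.powerset) ⟨∅, empty_mem_powerset F⟩
    fun A => f (X \ F ∪ A) + ∑ x ∈ F, k x (x ∈ X) (x ∈ A)
  exact ⟨A, mem_powerset.1 hA, h⟩

theorem kernel_add_kernel_le_of_exchange {k : Bool → Bool → S}
    (hk : k true false + k false true ≤ k true true + k false false)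
    {X Y A B I J : Finset N} {x : N} (hI : x ∈ I → x ∈ X \ Y) (hJ : x ∈ J → x ∈ B \ A) :
    k (x ∈ X) (x ∈ A) + k (x ∈ Y) (x ∈ B) ≤
      k (x ∈ X \ I ∪ J ∩ (Y \ X)) (x ∈ A \ (I \ B) ∪ J) +
        k (x ∈ Y \ (J ∩ (Y \ X)) ∪ I) (x ∈ B \ J ∪ I ∩ (A \ B)) := by
  have hk' := hk
  rw [add_comm, add_comm (k true true)] at hk'
  simp only [mem_union, mem_sdiff, mem_inter] at hI hJ ⊢
  by_cases hX : x ∈ X <;> by_cases hY : x ∈ Y <;> by_cases hA : x ∈ A <;>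
    by_cases hB : x ∈ B <;> by_cases hI : x ∈ I <;> by_cases hJ : x ∈ J <;>
    simp_all [add_comm]

/-- An exchange `I`, `J` between the optimal choices is followed by `X` and `Y` where it is
possible. Where it is not, the earning of `X` and `Y` can only increase. -/
protected theorem HasExchange.kernelTransform [IsOrderedAddMonoid S] (h : HasExchange m f)
    (hk : ∀ x ∈ F, k x true false + k x false true ≤ k x true true + k x false false) :
    HasExchange m (kernelTransform f F k) := by
  intro X Y I hI hIm
  obtain ⟨A, hA, hXA⟩ := exists_eq_kernelTransform f F k X
  obtain ⟨B, hB, hYB⟩ := exists_eq_kernelTransform f F k Y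
  obtain ⟨J, hJ, hJm, hf⟩ := h (X \ F ∪ A) (Y \ F ∪ B) (I ∩ ((X \ F ∪ A) \ (Y \ F ∪ B)))
    inter_subset_right ((Nat.cast_le.2 (card_le_card inter_subset_left)).trans hIm)
  refine ⟨J ∩ (Y \ X), inter_subset_right,
    (Nat.cast_le.2 (card_le_card inter_subset_left)).trans hJm, ?_⟩
  set X' := X \ I ∪ J ∩ (Y \ X) with hX'
  set Y' := Y \ (J ∩ (Y \ X)) ∪ I with hY'
  set A' := A \ (I \ B) ∪ J ∩ F with hA'
  set B' := B \ J ∪ I ∩ (A \ B) with hB'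
  have hXA' : (X \ F ∪ A) \ (I ∩ ((X \ F ∪ A) \ (Y \ F ∪ B))) ∪ J = X' \ F ∪ A' := by
    grind
  have hYB' : (Y \ F ∪ B) \ J ∪ I ∩ ((X \ F ∪ A) \ (Y \ F ∪ B)) = Y' \ F ∪ B' := by
    grind
  have earning : ∀ x ∈ F, k x (x ∈ X) (x ∈ A) + k x (x ∈ Y) (x ∈ B) ≤
      k x (x ∈ X') (x ∈ A') + k x (x ∈ Y') (x ∈ B') := by
    intro x hx
    have := kernel_add_kernel_le_of_exchange (hk x hx) (A := A) (B := B) (J := J) (@hI x) (by grind)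
    simpa only [hX', hY', hA', hB', mem_union, mem_inter, hx, and_true] using this
  calc kernelTransform f F k X + kernelTransform f F k Y
      = (f (X \ F ∪ A) + f (Y \ F ∪ B)) +
          ∑ x ∈ F, (k x (x ∈ X) (x ∈ A) + k x (x ∈ Y) (x ∈ B)) := by
        rw [hXA, hYB, sum_add_distrib, add_add_add_comm]
    _ ≤ (f (X' \ F ∪ A') + f (Y' \ F ∪ B')) +
          ∑ x ∈ F, (k x (x ∈ X') (x ∈ A') + k x (x ∈ Y') (x ∈ B')) := by
        rw [← hXA', ← hYB']
        exact add_le_add hf (sum_le_sum earning)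
    _ = (f (X' \ F ∪ A') + ∑ x ∈ F, k x (x ∈ X') (x ∈ A')) +
          (f (Y' \ F ∪ B') + ∑ x ∈ F, k x (x ∈ Y') (x ∈ B')) := by
        rw [sum_add_distrib, add_add_add_comm]
    _ ≤ kernelTransform f F k X' + kernelTransform f F k Y' :=
        add_le_add (le_kernelTransform (by grind) X') (le_kernelTransform (by grind) Y')

end KernelTransform

theorem exists_coe_forall_le {ι R : Type*} [SemilatticeSup R] [Nonempty R] (s : Finset ι)
    (f : ι → WithBot R) : ∃ K : R, ∀ a ∈ s, f a ≤ K :=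
  ⟨(s.sup f).unbotD (Classical.arbitrary R),
    fun _ ha => (le_sup ha).trans (WithBot.le_coe_unbotD _ _)⟩

section Reduction

variable {N R : Type*} [DecidableEq N] [AddCommGroup R] [LinearOrder R] {m n : ℕ∞}

/-- A finite-valued approximation from above of `f` restricted to the subsets of `U`: any subset of
`U` may be chosen in place of `X`, at the price `M` for each element of the symmetric difference. -/
def relaxation (f : Finset N → WithBot R) (U : Finset N) (M : R) : Finset N → WithBot R :=
  kernelTransform (fun A => f (A ∩ U)) U fun _ p q => ((if p = q then 0 else -M : R) : WithBot R)

variable {f : Finset N → WithBot R} {U X Y : Finset N} {M : R}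

protected theorem HasExchange.relaxation [IsOrderedAddMonoid R] (h : HasExchange m f)
    (U : Finset N) (hM : 0 ≤ M) : HasExchange m (relaxation f U M) := by
  refine (h.restrict U).kernelTransform fun x _ => ?_
  have : -M + -M ≤ 0 + 0 := by grind
  exact_mod_cast this

theorem le_relaxation_of_subset (hY : Y ⊆ U) (X : Finset N) :
    f Y + ((∑ x ∈ U, if decide (x ∈ X) = decide (x ∈ Y) then 0 else -M : R) : WithBot R) ≤
      relaxation f U M X := by
  have hXY : (X \ U ∪ Y) ∩ U = Y := by grind
  have h := le_kernelTransform (f := fun A => f (A ∩ U))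
    (k := fun _ p q => ((if p = q then 0 else -M : R) : WithBot R)) hY X
  rwa [hXY, ← WithBot.coe_sum] at h

theorem le_relaxation (hX : X ⊆ U) : f X ≤ relaxation f U M X := by
  simpa using le_relaxation_of_subset (f := f) (M := M) hX X

theorem relaxation_ne_bot (hY : Y ⊆ U) (hfY : f Y ≠ ⊥) (X : Finset N) :
    relaxation f U M X ≠ ⊥ :=
  ne_bot_of_le_ne_bot (by simp only [ne_eq, WithBot.add_eq_bot, hfY, WithBot.coe_ne_bot, or_self,
    not_false_eq_true]) (le_relaxation_of_subset hY X)

theorem relaxation_eq_or_le [IsOrderedAddMonoid R] {K : R} (hK : ∀ A ⊆ U, f A ≤ K) (hM : 0 ≤ M)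
    (hX : X ⊆ U) : relaxation f U M X = f X ∨ relaxation f U M X ≤ ((K - M : R) : WithBot R) := by
  obtain ⟨A, hA, hXA⟩ : ∃ A ⊆ U, relaxation f U M X = f A +
      ((∑ x ∈ U, if decide (x ∈ X) = decide (x ∈ A) then 0 else -M : R) : WithBot R) := by
    obtain ⟨A, hA, hXA⟩ := exists_eq_kernelTransform (fun A => f (A ∩ U)) U
      (fun _ p q => ((if p = q then 0 else -M : R) : WithBot R)) X
    have hA' : (X \ U ∪ A) ∩ U = A := by grind
    exact ⟨A, hA, by rwa [hA', ← WithBot.coe_sum] at hXA⟩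
  rcases eq_or_ne A X with rfl | hne
  · exact .inl (by simpa using hXA)
  · obtain ⟨x, hx, hxA⟩ : ∃ x ∈ U, decide (x ∈ X) ≠ decide (x ∈ A) := by
      by_contra! hall
      exact hne (by ext x; grind)
    have penalty : ∑ x ∈ U, (if decide (x ∈ X) = decide (x ∈ A) then 0 else -M) ≤ -M := by
      rw [← add_sum_erase _ _ hx, if_neg hxA]
      exact add_le_of_nonpos_right (sum_nonpos fun y _ => by grind)
    refine .inr (hXA.trans_le ?_)
    rw [sub_eq_add_neg, WithBot.coe_add]
    exact add_le_add (hK A hA) (WithBot.coe_le_coe.2 penalty)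

theorem HasExchange.exists_total_approx [Nontrivial R] [IsOrderedAddMonoid R]
    (hf : HasExchange m f) (hX : X ⊆ U) (hfX : f X ≠ ⊥) (c : R) :
    ∃ w : Finset N → R, HasExchange m w ∧ (∀ P ⊆ U, f P ≤ w P) ∧
      ∀ P ⊆ U, ∀ Q ⊆ U, c ≤ w P + w Q → f P = w P := by
  obtain ⟨K, hfK⟩ := exists_coe_forall_le U.powerset f
  have hK : ∀ A ⊆ U, f A ≤ K := fun A hA => hfK A (mem_powerset.2 hA)
  obtain ⟨M, hM⟩ := exists_gt (max 0 (K + K - c))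
  obtain ⟨hM0, hMK⟩ := max_lt_iff.1 hM
  obtain ⟨w, hw⟩ : ∃ w : Finset N → R, ∀ P, (w P : WithBot R) = relaxation f U M P :=
    ⟨fun P => (relaxation f U M P).unbot (relaxation_ne_bot hX hfX P),
      fun P => WithBot.coe_unbot _ _⟩
  have exact_or_small {P : Finset N} (hP : P ⊆ U) : (w P : WithBot R) = f P ∨ w P ≤ K - M :=
    (hw P ▸ relaxation_eq_or_le hK hM0.le hP).imp_right WithBot.coe_le_coe.1
  have bounded {P : Finset N} (hP : P ⊆ U) : w P ≤ K := by
    rcases exact_or_small hP with h | h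
    · exact WithBot.coe_le_coe.1 (h ▸ hK P hP)
    · grind
  refine ⟨w, ?_, fun P hP => hw P ▸ le_relaxation hP, fun P hP Q hQ hPQ => ?_⟩
  · rw [← HasExchange.coe_withBot_iff]
    simpa only [hw] using hf.relaxation U hM0.le
  · have := bounded hQ
    exact ((exact_or_small hP).resolve_right (by grind)).symm

theorem HasExchange.of_forall_total [Nontrivial R] [IsOrderedAddMonoid R]
    (h : ∀ v : Finset N → R, HasExchange m v → HasExchange n v) (hf : HasExchange m f) :
    HasExchange n f := by
  intro X Y I hI hIn
  by_cases hfin : f X = ⊥ ∨ f Y = ⊥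
  · refine ⟨∅, by simp, by simp, le_of_eq_of_le ?_ bot_le⟩
    rcases hfin with hX | hY <;> simp [*]
  obtain ⟨hX, hY⟩ := not_or.1 hfin
  obtain ⟨a, ha⟩ := WithBot.ne_bot_iff_exists.1 hX
  obtain ⟨b, hb⟩ := WithBot.ne_bot_iff_exists.1 hY
  obtain ⟨w, hwm, hfw, hw⟩ :=
    hf.exists_total_approx (subset_union_left (s₁ := X) (s₂ := Y)) hX (a + b)
  obtain ⟨J, hJ, hJn, hwJ⟩ := h w hwm X Y I hI hIn
  refine ⟨J, hJ, hJn, ?_⟩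
  have haw : a ≤ w X := WithBot.coe_le_coe.1 (ha ▸ hfw X subset_union_left)
  have hbw : b ≤ w Y := WithBot.coe_le_coe.1 (hb ▸ hfw Y subset_union_right)
  have habJ : a + b ≤ w (X \ I ∪ J) + w (Y \ J ∪ I) := (add_le_add haw hbw).trans hwJ
  rw [hw (X \ I ∪ J) (by grind) (Y \ J ∪ I) (by grind) habJ,
    hw (Y \ J ∪ I) (by grind) (X \ I ∪ J) (by grind) (by rwa [add_comm (w _)]), ← ha, ← hb]
  exact_mod_cast habJ

end Reduction

section Local

variable {N R : Type*} [DecidableEq N] [LinearOrder R] {v : Finset N → R} {Y Z : Finset N}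
  {i j k : N}

theorem HasExchange.triple_le_max [AddCommMagma R] (h : HasExchange ⊤ v) (hi : i ∉ Z) (hj : j ∉ Z)
    (hij : i ≠ j) (hjk : j ≠ k) :
    v (insert j (insert k Z)) + v (insert i Z) ≤
      max (v (insert i (insert k Z)) + v (insert j Z))
        (v (insert i (insert j Z)) + v (insert k Z)) := by
  obtain ⟨J, hJ, hv⟩ := hasExchange_top_iff.1 h (insert j (insert k Z)) (insert i Z) {j} (by grind)
  have hJi : J ⊆ {i} := by grind
  rcases subset_singleton_iff.1 hJi with rfl | rfl
  · have e₁ : insert j (insert k Z) \ {j} ∪ ∅ = insert k Z := by grind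
    have e₂ : insert i Z \ ∅ ∪ {j} = insert i (insert j Z) := by grind
    rw [e₁, e₂, add_comm (v (insert k Z))] at hv
    exact le_max_of_le_right hv
  · have e₁ : insert j (insert k Z) \ {j} ∪ {i} = insert i (insert k Z) := by grind
    have e₂ : insert i Z \ {i} ∪ {j} = insert j Z := by grind
    rw [e₁, e₂] at hv
    exact le_max_of_le_left hv

variable [AddCommGroup R] [IsOrderedAddMonoid R]

theorem HasExchange.quadruple_le_max (h : HasExchange ⊤ v) {a b c d : N}
    (ha : a ∉ Z) (hb : b ∉ Z) (hc : c ∉ Z) (hd : d ∉ Z) (hab : a ≠ b) (hac : a ≠ c) (had : a ≠ d)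
    (hbc : b ≠ c) (hcd : c ≠ d) :
    v (insert a (insert b Z)) + v (insert c (insert d Z)) ≤
      max (v (insert a (insert c Z)) + v (insert b (insert d Z)))
        (v (insert a (insert d Z)) + v (insert b (insert c Z))) := by
  have h_ab_c := h.triple_le_max hc ha hac.symm hab
  have h_ab_d := h.triple_le_max hd ha had.symm hab
  have h_cd_a := h.triple_le_max ha hc hac hcd
  have h_cd_b := h.triple_le_max hb hc hbc hcd
  rw [insert_comm c b, insert_comm c a] at h_ab_c
  rw [insert_comm d b, insert_comm d a] at h_ab_d
  grind

theorem HasExchange.pair_le_max (h : HasExchange ⊤ v) {E F : Finset N}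
    (hE : #E ≤ 1) (hF : #F ≤ 1) (hEF : Disjoint E F) (hZE : Disjoint Z E) (hZF : Disjoint Z F)
    (hi : i ∉ Z ∪ E ∪ F) (hj : j ∉ Z ∪ E ∪ F) (hij : i ≠ j) :
    v (insert i (insert j Z)) + v (Z ∪ E ∪ F) ≤
      max (v (insert i (Z ∪ F)) + v (insert j (Z ∪ E)))
        (v (insert i (Z ∪ E)) + v (insert j (Z ∪ F))) := by
  simp only [mem_union, not_or] at hi hj
  rcases card_le_one_iff_eq_empty_or_singleton.1 hE with rfl | ⟨e, rfl⟩ <;>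
    rcases card_le_one_iff_eq_empty_or_singleton.1 hF with rfl | ⟨f, rfl⟩ <;>
    simp only [union_empty, union_singleton, disjoint_singleton_right, mem_singleton] at *
  · have := h.add_le_erase_add_insert le_top (X := insert i (insert j Z)) (Y := Z) (i := i)
      (by grind) (by grind)
    rw [erase_insert (by grind), add_comm (v (insert j Z))] at this
    exact le_max_of_le_left this
  · have := h.triple_le_max hZF hi.1.1 (Ne.symm hi.2) hij
    rwa [insert_comm f i, insert_comm f j, max_comm, add_comm (v (insert j (insert f Z)))] at this
  · have := h.triple_le_max hZE hi.1.1 (Ne.symm hi.1.2) hij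
    rwa [insert_comm e i, insert_comm e j, add_comm (v (insert j (insert e Z)))] at this
  · have := h.quadruple_le_max hi.1.1 hj.1.1 hZE hZF hij hi.1.2 hi.2 hj.1.2 (Ne.symm hEF)
    rwa [insert_comm e f, max_comm] at this

theorem HasExchange.insert_insert_sdiff_le_max (h : HasExchange ⊤ v)
    {E F : Finset N} (hE : #E ≤ 1) (hF : #F ≤ 1) (hEF : Disjoint E F) (hEY : E ⊆ Y) (hFY : F ⊆ Y)
    (hi : i ∉ Y) (hj : j ∉ Y) (hij : i ≠ j) :
    v (insert i (insert j Y \ F) \ E) + v Y ≤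
      max (v (insert i Y \ E) + v (insert j Y \ F)) (v (insert i Y \ F) + v (insert j Y \ E)) := by
  have pair := h.pair_le_max (Z := Y \ (E ∪ F)) (i := i) (j := j) hE hF hEF
    (disjoint_left.2 (by grind)) (disjoint_left.2 (by grind)) (by grind) (by grind) hij
  have hEF' := disjoint_left.1 hEF
  have e₁ : insert i (insert j (Y \ (E ∪ F))) = insert i (insert j Y \ F) \ E := by grind
  have e₂ : Y \ (E ∪ F) ∪ E ∪ F = Y := by grind
  have e₃ : insert i (Y \ (E ∪ F) ∪ E) = insert i Y \ F := by grind
  have e₄ : insert i (Y \ (E ∪ F) ∪ F) = insert i Y \ E := by grind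
  have e₅ : insert j (Y \ (E ∪ F) ∪ E) = insert j Y \ F := by grind
  have e₆ : insert j (Y \ (E ∪ F) ∪ F) = insert j Y \ E := by grind
  rwa [e₁, e₂, e₃, e₄, e₅, e₆] at pair

end Local

section MultipleToSingle

variable {N R : Type*} [DecidableEq N] [AddCommGroup R] [LinearOrder R] [IsOrderedAddMonoid R]
  {v : Finset N → R} {X Y : Finset N} {i : N}

theorem HasExchange.exists_swap (h : HasExchange ⊤ v) (hXY : X \ Y = {i})
    (hYX : (Y \ X).Nonempty) :
    ∃ k ∈ Y \ X, v X + v Y ≤ v (insert k (X.erase i)) + v ((insert i Y).erase k) := by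
  induction hD : Y \ X using Finset.strongInduction generalizing X with
  | H D ih =>
    subst hD
    have mem_iff (x : N) : x ∈ X ∧ x ∉ Y ↔ x = i := by simpa using Finset.ext_iff.1 hXY x
    obtain ⟨j, hj, hmax⟩ := exists_max_image (Y \ X)
      (fun j => v (insert j X) + v ((insert i Y).erase j)) hYX
    rcases (Y \ insert j X).eq_empty_or_nonempty with hYj | hYj
    · have hYj' (x : N) : ¬(x ∈ Y ∧ x ∉ insert j X) := by simpa using Finset.ext_iff.1 hYj x
      have eX : insert j (X.erase i) = Y := by grind
      have eY : (insert i Y).erase j = X := by grind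
      exact ⟨j, hj, by rw [eX, eY, add_comm]⟩
    · obtain ⟨k, hk, hvk⟩ := ih (Y \ insert j X)
        ((ssubset_iff_of_subset (by grind)).2 ⟨j, by grind⟩) (by grind) hYj rfl
      have triple := h.triple_le_max (Z := X.erase i) (i := i) (j := k) (k := j) (by grind)
        (by grind) (by grind) (by grind)
      have hmaxk := hmax k (by grind)
      have eX : insert i (X.erase i) = X := insert_erase (by grind)
      have ejX : (insert j X).erase i = insert j (X.erase i) := erase_insert_of_ne (by grind)
      rw [insert_comm i k, insert_comm i j, eX] at triple
      rw [ejX] at hvk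
      rcases le_max_iff.1 triple with hle | hle
      · exact ⟨k, by grind, by grind⟩
      · exact ⟨j, hj, by grind⟩

theorem HasExchange.one_of_top (h : HasExchange ⊤ v) : HasExchange 1 v := by
  rw [hasExchange_one_iff]
  intro X Y i hi
  induction hD : X \ Y using Finset.strongInduction generalizing Y with
  | H D ih =>
    subst hD
    by_cases hXY : X \ Y = {i}
    · rcases (Y \ X).eq_empty_or_nonempty with hYX | hYX
      · refine ⟨∅, by simp, by simp, ?_⟩
        simpa using h.add_le_erase_add_insert le_top (sdiff_eq_empty_iff_subset.1 hYX) hi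
      · obtain ⟨k, hk, hv⟩ := h.exists_swap hXY hYX
        refine ⟨{k}, by simpa using hk, by simp, ?_⟩
        rwa [union_singleton, sdiff_singleton_eq_erase]
    · obtain ⟨j, hj, hji⟩ : ∃ j ∈ X \ Y, j ≠ i := by
        by_contra! hall
        exact hXY (eq_singleton_iff_unique_mem.2 ⟨hi, hall⟩)
      obtain ⟨F, hF, hmax⟩ := exists_max_image ({F ∈ (Y \ X).powerset | #F ≤ 1})
        (fun F => v (X.erase i ∪ F) + v (insert j Y \ F)) ⟨∅, by simp⟩
      simp only [mem_filter, mem_powerset] at hF hmax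
      obtain ⟨E, hE, hE1, hvE⟩ := ih (X \ (insert j Y \ F))
        ((ssubset_iff_of_subset (by grind)).2 ⟨j, by grind⟩) (Y := insert j Y \ F) (by grind) rfl
      have hEY : E ⊆ Y \ X := by grind
      have hEF : Disjoint E F := disjoint_left.2 (by grind)
      have hmaxE := hmax E ⟨hEY, hE1⟩
      have pair := h.insert_insert_sdiff_le_max hE1 hF.2 hEF (hEY.trans sdiff_subset)
        (hF.1.trans sdiff_subset) (mem_sdiff.1 hi).2 (mem_sdiff.1 hj).2 hji.symm
      rcases le_max_iff.1 pair with hle | hle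
      · exact ⟨E, hEY, hE1, by grind⟩
      · exact ⟨F, hF.1, hF.2, by grind⟩

end MultipleToSingle

section IndirectUtility

variable {N R : Type*} [AddCommGroup R] [LinearOrder R] {m : ℕ∞}

/-- The maximal utility, valuing sets by `v`, from buying a subset of `F` at the prices `p`; as a
function of `p`, the concave conjugate of the restriction of `v` to the subsets of `F`. -/
def indirectUtility (v : Finset N → R) (F : Finset N) (p : N → R) : R :=
  F.powerset.sup' ⟨∅, empty_mem_powerset F⟩ fun A => v A - ∑ x ∈ A, p x

variable {v : Finset N → R} {F S I X Y A : Finset N} {p q lo hi : N → R}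

theorem le_indirectUtility (hA : A ⊆ F) : v A - ∑ x ∈ A, p x ≤ indirectUtility v F p :=
  le_sup' (fun A => v A - ∑ x ∈ A, p x) (mem_powerset.2 hA)

theorem exists_eq_indirectUtility (v : Finset N → R) (F : Finset N) (p : N → R) :
    ∃ A ⊆ F, indirectUtility v F p = v A - ∑ x ∈ A, p x := by
  obtain ⟨A, hA, h⟩ := exists_mem_eq_sup' (s := F.powerset) ⟨∅, empty_mem_powerset F⟩
    fun A => v A - ∑ x ∈ A, p x
  exact ⟨A, mem_powerset.1 hA, h⟩

theorem indirectUtility_congr (h : ∀ x ∈ F, p x = q x) :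
    indirectUtility v F p = indirectUtility v F q :=
  sup'_congr _ rfl fun A hA => by rw [sum_congr rfl fun x hx => h x (mem_powerset.1 hA hx)]

variable [DecidableEq N] [IsOrderedAddMonoid R]

theorem indirectUtility_union_le (hSF : Disjoint S F) :
    indirectUtility v (S ∪ F) p ≤
      indirectUtility (fun B => indirectUtility (fun A => v (B \ S ∪ A)) S p) F p := by
  have hSF' := disjoint_left.1 hSF
  obtain ⟨C, hC, hvC⟩ := exists_eq_indirectUtility v (S ∪ F) p
  have eC : (C ∩ F) \ S ∪ C ∩ S = C := by grind
  calc indirectUtility v (S ∪ F) p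
      = v ((C ∩ F) \ S ∪ C ∩ S) - ∑ x ∈ C ∩ S, p x - ∑ x ∈ C ∩ F, p x := by
        rw [eC, hvC, sub_sub, ← sum_union (disjoint_left.2 (by grind)), ← inter_union_distrib_left,
          inter_eq_left.2 hC]
    _ ≤ indirectUtility (fun A => v ((C ∩ F) \ S ∪ A)) S p - ∑ x ∈ C ∩ F, p x :=
        sub_le_sub_right (le_indirectUtility (v := fun A => v ((C ∩ F) \ S ∪ A))
          inter_subset_right) _
    _ ≤ _ := le_indirectUtility (v := fun B => indirectUtility (fun A => v (B \ S ∪ A)) S p)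
        inter_subset_right

protected theorem HasExchange.indirectUtility (h : HasExchange m v) (F : Finset N)
    (hle : lo ≤ hi) :
    HasExchange m fun X => indirectUtility (fun A => v (X \ F ∪ A)) F (X.piecewise lo hi) := by
  have eq_kernelTransform (X : Finset N) :
      indirectUtility (fun A => v (X \ F ∪ A)) F (X.piecewise lo hi) =
        kernelTransform v F (fun x p q => if q then -(if p then lo x else hi x) else 0) X := by
    refine sup'_congr _ rfl fun A hA => ?_
    simp [sub_eq_add_neg, ← sum_neg_distrib, piecewise, inter_eq_right.2 (mem_powerset.1 hA)]
  simp only [eq_kernelTransform]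
  exact h.kernelTransform fun x _ => by simpa using hle x

theorem HasExchange.add_le_sdiff_add_union (h : HasExchange m v) (hm : 1 ≤ m) (hYX : Y ⊆ X)
    (hI : I ⊆ X \ Y) : v X + v Y ≤ v (X \ I) + v (Y ∪ I) := by
  induction I using Finset.induction_on generalizing Y with
  | empty => simp
  | insert i I hi ih =>
    have hI' := insert_subset_iff.1 hI
    have h₁ := ih (Y := insert i Y) (by grind) (by grind)
    have h₂ := h.add_le_erase_add_insert hm (X := X \ I) (Y := Y) (i := i) (by grind) (by grind)
    have e₁ : (X \ I).erase i = X \ insert i I := by grind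
    have e₂ : insert i Y ∪ I = Y ∪ insert i I := by grind
    rw [e₂] at h₁
    rw [e₁] at h₂
    grind

theorem HasExchange.indirectUtility_sup_add_inf_le (h : HasExchange m v) (hm : 1 ≤ m)
    (hSF : Disjoint S F) (hI : I ⊆ S) (p q : N → R) :
    indirectUtility v F (p ⊔ q) + indirectUtility (fun A => v (S ∪ A)) F (p ⊓ q) ≤
      indirectUtility (fun A => v (S \ I ∪ A)) F p + indirectUtility (fun A => v (I ∪ A)) F q := by
  set G := {x ∈ F | q x ≤ p x}
  have hSF' := disjoint_left.1 hSF
  have hsub := (h.indirectUtility F (inf_le_sup (a := p) (b := q))).add_le_sdiff_add_union hm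
    (X := S ∪ F) (Y := ∅) (I := I ∪ G) (empty_subset _) (by grind)
  have e₁ : (S ∪ F) \ F = S := by grind
  have e₂ : ((S ∪ F) \ (I ∪ G)) \ F = S \ I := by grind
  have e₃ : (∅ ∪ (I ∪ G)) \ F = I := by grind
  have price_top : indirectUtility (fun A => v (S ∪ A)) F ((S ∪ F).piecewise (p ⊓ q) (p ⊔ q)) =
      indirectUtility (fun A => v (S ∪ A)) F (p ⊓ q) :=
    indirectUtility_congr fun x hx => piecewise_eq_of_mem _ _ _ (mem_union_right _ hx)
  have price_left : indirectUtility (fun A => v (S \ I ∪ A)) F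
        (((S ∪ F) \ (I ∪ G)).piecewise (p ⊓ q) (p ⊔ q)) =
      indirectUtility (fun A => v (S \ I ∪ A)) F p :=
    indirectUtility_congr fun x hx => by
      simp only [piecewise, Pi.inf_apply, Pi.sup_apply]
      grind
  have price_right : indirectUtility (fun A => v (I ∪ A)) F
        ((∅ ∪ (I ∪ G)).piecewise (p ⊓ q) (p ⊔ q)) =
      indirectUtility (fun A => v (I ∪ A)) F q :=
    indirectUtility_congr fun x hx => by
      simp only [piecewise, Pi.inf_apply, Pi.sup_apply]
      grind
  rw [e₁, e₂, e₃, price_top, price_left, price_right] at hsub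
  simpa [add_comm] using hsub

theorem indirectUtility_insert_update_le {y : N} (hy : y ∉ F) (t : R) :
    indirectUtility v (insert y F) (Function.update p y t) ≤
      indirectUtility (fun B => indirectUtility (fun A => v (B \ {y} ∪ A)) {y} fun _ => t) F p := by
  have price_y : ∀ x ∈ ({y} : Finset N), Function.update p y t x = t := by simp
  have price_F : ∀ x ∈ F, Function.update p y t x = p x := fun x hx =>
    Function.update_of_ne (by grind) _ _
  rw [insert_eq]
  refine (indirectUtility_union_le (disjoint_singleton_left.2 hy)).trans_eq ?_
  simp only [indirectUtility_congr price_y, indirectUtility_congr price_F]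

end IndirectUtility

section Welfare

variable {N R : Type*} [DecidableEq N] [Add R] [LinearOrder R]

/-- The maximal total value of a division of the goods `Y` between two buyers who value sets by `v`
and by `w`. -/
def welfare (v w : Finset N → R) (Y : Finset N) : R :=
  Y.powerset.sup' ⟨∅, empty_mem_powerset Y⟩ fun J => v J + w (Y \ J)

variable {v w : Finset N → R} {Y J : Finset N} {y : N}

theorem le_welfare (hJ : J ⊆ Y) : v J + w (Y \ J) ≤ welfare v w Y :=
  le_sup' (fun J => v J + w (Y \ J)) (mem_powerset.2 hJ)

theorem exists_eq_welfare (v w : Finset N → R) (Y : Finset N) :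
    ∃ J ⊆ Y, welfare v w Y = v J + w (Y \ J) := by
  obtain ⟨J, hJ, h⟩ := exists_mem_eq_sup' (s := Y.powerset) ⟨∅, empty_mem_powerset Y⟩
    fun J => v J + w (Y \ J)
  exact ⟨J, mem_powerset.1 hJ, h⟩

theorem welfare_insert_left_le (hy : y ∉ Y) :
    welfare (fun A => v ({y} ∪ A)) w Y ≤ welfare v w (insert y Y) := by
  obtain ⟨J, hJ, hvJ⟩ := exists_eq_welfare (fun A => v ({y} ∪ A)) w Y
  have e : insert y Y \ ({y} ∪ J) = Y \ J := by grind
  exact hvJ.trans_le (e ▸ le_welfare (v := v) (w := w) (by grind))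

theorem welfare_insert_right_le (hy : y ∉ Y) :
    welfare v (fun A => w ({y} ∪ A)) Y ≤ welfare v w (insert y Y) := by
  obtain ⟨J, hJ, hvJ⟩ := exists_eq_welfare v (fun A => w ({y} ∪ A)) Y
  have e : insert y Y \ J = {y} ∪ Y \ J := by grind
  exact hvJ.trans_le (e ▸ le_welfare (v := v) (w := w) (hJ.trans (subset_insert y Y)))

end Welfare

section Duality

variable {N R : Type*} [DecidableEq N] [AddCommGroup R] [LinearOrder R] [IsOrderedAddMonoid R]
  {v w : Finset N → R} {Y : Finset N} {y : N}

theorem welfare_le_indirectUtility_add (p : N → R) :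
    welfare v w Y ≤ indirectUtility v Y p + indirectUtility w Y p + ∑ x ∈ Y, p x := by
  obtain ⟨J, hJ, hvJ⟩ := exists_eq_welfare v w Y
  have hv : v J - ∑ x ∈ J, p x ≤ indirectUtility v Y p := le_indirectUtility hJ
  have hw : w (Y \ J) - ∑ x ∈ Y \ J, p x ≤ indirectUtility w Y p :=
    le_indirectUtility sdiff_subset
  have := sum_sdiff (f := p) hJ
  grind

/-- Supporting prices `p` and `q` of the right-hand side give the prices `p ⊔ q` and `p ⊓ q`, which
by the submodularity of the indirect utilities bound the left-hand side. -/
theorem HasExchange.welfare_add_le (hv : HasExchange 1 v) (hw : HasExchange 1 w) (hy : y ∉ Y)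
    {p q : N → R}
    (hp : indirectUtility v Y p + indirectUtility (fun A => w ({y} ∪ A)) Y p + ∑ x ∈ Y, p x ≤
      welfare v (fun A => w ({y} ∪ A)) Y)
    (hq : indirectUtility (fun A => v ({y} ∪ A)) Y q + indirectUtility w Y q + ∑ x ∈ Y, q x ≤
      welfare (fun A => v ({y} ∪ A)) w Y) :
    welfare v w Y + welfare (fun A => v ({y} ∪ A)) (fun A => w ({y} ∪ A)) Y ≤
      welfare v (fun A => w ({y} ∪ A)) Y + welfare (fun A => v ({y} ∪ A)) w Y := by
  have hyY : Disjoint {y} Y := disjoint_singleton_left.2 hy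
  have hv_sub := hv.indirectUtility_sup_add_inf_le le_rfl hyY subset_rfl p q
  have hw_sub := hw.indirectUtility_sup_add_inf_le le_rfl hyY (empty_subset _) p q
  simp only [sdiff_self, sdiff_empty, empty_union, bot_eq_empty] at hv_sub hw_sub
  have h_sup := welfare_le_indirectUtility_add (v := v) (w := w) (Y := Y) (p ⊔ q)
  have h_inf := welfare_le_indirectUtility_add (v := fun A => v ({y} ∪ A))
    (w := fun A => w ({y} ∪ A)) (Y := Y) (p ⊓ q)
  have price : ∑ x ∈ Y, (p ⊔ q) x + ∑ x ∈ Y, (p ⊓ q) x = ∑ x ∈ Y, p x + ∑ x ∈ Y, q x := by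
    simp only [← sum_add_distrib, Pi.sup_apply, Pi.inf_apply, max_add_min]
  grind

theorem welfare_indirectUtility_singleton_add_le (hy : y ∉ Y) {t : R}
    (h_none : welfare v w Y + t ≤ welfare v w (insert y Y))
    (h_both : welfare (fun A => v ({y} ∪ A)) (fun A => w ({y} ∪ A)) Y ≤
      welfare v w (insert y Y) + t) :
    welfare (fun B => indirectUtility (fun A => v (B \ {y} ∪ A)) {y} fun _ => t)
        (fun B => indirectUtility (fun A => w (B \ {y} ∪ A)) {y} fun _ => t) Y + t ≤
      welfare v w (insert y Y) := by
  obtain ⟨J, hJ, hvJ⟩ := exists_eq_welfare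
    (fun B => indirectUtility (fun A => v (B \ {y} ∪ A)) {y} fun _ => t)
    (fun B => indirectUtility (fun A => w (B \ {y} ∪ A)) {y} fun _ => t) Y
  obtain ⟨A, hA, hvA⟩ :=
    exists_eq_indirectUtility (fun A => v (J \ {y} ∪ A)) {y} fun _ => t
  obtain ⟨B, hB, hwB⟩ :=
    exists_eq_indirectUtility (fun B => w ((Y \ J) \ {y} ∪ B)) {y} fun _ => t
  have eJ : J \ {y} = J := by grind
  have eJ' : (Y \ J) \ {y} = Y \ J := by grind
  rw [eJ] at hvA
  rw [eJ'] at hwB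
  simp only [eJ, eJ'] at hvJ
  rw [hvJ, hvA, hwB]
  have left := le_welfare (v := fun A => v ({y} ∪ A)) (w := w) hJ
  have right := le_welfare (v := v) (w := fun A => w ({y} ∪ A)) hJ
  have none := le_welfare (v := v) (w := w) hJ
  have both := le_welfare (v := fun A => v ({y} ∪ A)) (w := fun A => w ({y} ∪ A)) hJ
  have h_left := welfare_insert_left_le (v := v) (w := w) hy
  have h_right := welfare_insert_right_le (v := v) (w := w) hy
  rcases subset_singleton_iff.1 hA with rfl | rfl <;>
    rcases subset_singleton_iff.1 hB with rfl | rfl <;>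
    simp only [union_empty, union_comm _ {y}, sum_empty, sum_singleton] <;> grind

theorem HasExchange.exists_supporting_price (hv : HasExchange 1 v) (hw : HasExchange 1 w)
    (Y : Finset N) :
    ∃ p : N → R, indirectUtility v Y p + indirectUtility w Y p + ∑ x ∈ Y, p x ≤
      welfare v w Y := by
  induction Y using Finset.induction_on generalizing v w with
  | empty => exact ⟨0, by simp [indirectUtility, welfare]⟩
  | insert y Y hy ih =>
    obtain ⟨p, hp⟩ := ih hv (hw.contract {y})
    obtain ⟨q, hq⟩ := ih (hv.contract {y}) hw
    have concave := hv.welfare_add_le hw hy hp hq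
    have h_left := welfare_insert_left_le (v := v) (w := w) hy
    have h_right := welfare_insert_right_le (v := v) (w := w) hy
    obtain ⟨t, ht⟩ : ∃ t, welfare v w Y + t = welfare v w (insert y Y) :=
      ⟨_, add_sub_cancel _ _⟩
    have at_price_t {u : Finset N → R} (hu : HasExchange 1 u) : HasExchange 1
        fun B => indirectUtility (fun A => u (B \ {y} ∪ A)) {y} fun _ => t := by
      simpa only [piecewise_same] using hu.indirectUtility {y} (le_refl fun _ => t)
    obtain ⟨r, hr⟩ := ih (at_price_t hv) (at_price_t hw)
    refine ⟨Function.update r y t, ?_⟩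
    have hvr := indirectUtility_insert_update_le (v := v) (p := r) hy t
    have hwr := indirectUtility_insert_update_le (v := w) (p := r) hy t
    have price : ∑ x ∈ insert y Y, Function.update r y t x = t + ∑ x ∈ Y, r x := by
      rw [sum_insert hy, Function.update_self, sum_update_of_notMem hy]
    have total := welfare_indirectUtility_singleton_add_le (v := v) (w := w) hy ht.le (by grind)
    grind

end Duality

section SingleToMultiple

variable {N R : Type*} [DecidableEq N] [AddCommGroup R] [LinearOrder R] [IsOrderedAddMonoid R]
  {v : Finset N → R} {X Y I : Finset N}

theorem HasExchange.exists_exchange_of_disjoint (h : HasExchange 1 v) (hXY : Disjoint X Y)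
    (hI : I ⊆ X) : ∃ J ⊆ Y, v X + v Y ≤ v (X \ I ∪ J) + v (Y \ J ∪ I) := by
  obtain ⟨p, hp⟩ := (h.contract (X \ I)).exists_supporting_price (h.contract I) Y
  obtain ⟨J, hJ, hvJ⟩ := exists_eq_welfare (fun A => v (X \ I ∪ A)) (fun A => v (I ∪ A)) Y
  refine ⟨J, hJ, ?_⟩
  have submodular := h.indirectUtility_sup_add_inf_le le_rfl hXY hI p p
  rw [sup_idem, inf_idem] at submodular
  have hY : v Y - ∑ x ∈ Y, p x ≤ indirectUtility v Y p := le_indirectUtility subset_rfl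
  have hX : v X ≤ indirectUtility (fun A => v (X ∪ A)) Y p := by
    simpa using le_indirectUtility (v := fun A => v (X ∪ A)) (p := p) (empty_subset Y)
  rw [union_comm _ I]
  grind

theorem HasExchange.top_of_one (h : HasExchange 1 v) : HasExchange ⊤ v := by
  rw [hasExchange_top_iff]
  intro X Y I hI
  obtain ⟨J, hJ, hv⟩ := (h.contract (X ∩ Y)).exists_exchange_of_disjoint (X := X \ Y) (Y := Y \ X)
    (disjoint_left.2 (by grind)) hI
  have eX : X ∩ Y ∪ X \ Y = X := by grind
  have eY : X ∩ Y ∪ Y \ X = Y := by grind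
  have eX' : X ∩ Y ∪ ((X \ Y) \ I ∪ J) = X \ I ∪ J := by grind
  have eY' : X ∩ Y ∪ ((Y \ X) \ J ∪ I) = Y \ J ∪ I := by grind
  exact ⟨J, hJ, by rwa [eX, eY, eX', eY'] at hv⟩

end SingleToMultiple

section MNatural

variable {N : Type*} [DecidableEq N] {f : Finset N → WithBot ℝ}

theorem mExc_iff_hasExchange_one : MExc f ↔ HasExchange 1 f := by
  rw [hasExchange_one_iff]
  constructor
  · intro h X Y i hi
    by_cases hbot : f X + f Y = ⊥
    · exact ⟨∅, by simp, by simp, hbot.trans_le bot_le⟩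
    rcases le_max_iff.1 (h X Y i hi) with hf | hf
    · exact ⟨∅, by simp, by simp, by rwa [union_empty, sdiff_empty]⟩
    · obtain ⟨j, hj, hf⟩ := (Finset.le_sup_iff (bot_lt_iff_ne_bot.2 hbot)).1 hf
      exact ⟨{j}, by simpa using hj, by simp, by rwa [union_singleton, sdiff_singleton_eq_erase]⟩
  · intro h X Y i hi
    obtain ⟨E, hE, hE1, hf⟩ := h X Y i hi
    rcases card_le_one_iff_eq_empty_or_singleton.1 hE1 with rfl | ⟨j, rfl⟩
    · rw [union_empty, sdiff_empty] at hf
      exact le_max_of_le_left hf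
    · rw [union_singleton, sdiff_singleton_eq_erase] at hf
      exact le_max_of_le_right (hf.trans (le_sup
        (f := fun j => f (insert j (X.erase i)) + f ((insert i Y).erase j)) (by simpa using hE)))

theorem mExcM_iff_hasExchange_top : MExcM f ↔ HasExchange ⊤ f :=
  hasExchange_top_iff.symm

theorem mnat_concave_iff_multiple_exchange_general (f : Finset N → WithBot ℝ) :
    MExc f ↔ MExcM f := by
  rw [mExc_iff_hasExchange_one, mExcM_iff_hasExchange_top]
  exact ⟨.of_forall_total fun _ => .top_of_one, .of_forall_total fun _ => .one_of_top⟩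

end MNatural

theorem mnat_concave_iff_multiple_exchange {N : Type*} [Fintype N] [DecidableEq N]
    (f : Finset N → WithBot ℝ) (hdom : ∃ X, f X ≠ ⊥) :
    MExc f ↔ MExcM f :=
  mnat_concave_iff_multiple_exchange_general f
end

section
/- Let f : 2^N → ℝ ∪ {-∞} be a set function whose effective domain dom f satisfies the exchange property (B♮-EXC). If f satisfies the multiple exchange property (M♮-EXC_m), then f satisfies the exchange property (M♮-EXC). -/
open Finset

/-- (B♮-EXC): exchange property for set families. -/
def BExc {N : Type*} [DecidableEq N] (F : Set (Finset N)) : Prop :=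
  ∀ X ∈ F, ∀ Y ∈ F, ∀ i ∈ X \ Y,
    (X.erase i ∈ F ∧ insert i Y ∈ F) ∨
      ∃ j ∈ Y \ X, insert j (X.erase i) ∈ F ∧ (insert i Y).erase j ∈ F

/-!
Only exchanges of a single element `i` against a set `J` are needed. Applied to sets at distance at
most four, they yield the local exchange inequalities of a valuated matroid: the outcomes other than
single exchanges involve sets of sizes one and three over a common core, and these are excluded
because, after normalization by the values at singletons, the remaining inequalities are those of an
ultrametric, which force the four-point condition.

Local exchange then spreads to all pairs by induction on `X \ Y`. Suppose every exchange of `i`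
between `X` and `Y` against a set `U` of at most one element strictly decreases `f X + f Y`. The
exchange property of `dom f` provides moves from `Y` to some `Y \ U ∪ {a}` in `dom f` closer to `X`,
and by local exchange the move maximizing `f (X \ {i} ∪ U) + f (Y \ U ∪ {a})` preserves the strict
decrease, contradicting the induction hypothesis. If `X \ Y = {i}`, removing an element from `Y`
plays the role of the move.
-/

section WithBot

variable {G : Type*} [LinearOrder G]

lemma exists_ne_bot_forall_add_le [Add G] {ι : Type*} {S : Finset ι} {α γ : ι → WithBot G}
    (hγ : ∃ v ∈ S, γ v ≠ ⊥) : ∃ u ∈ S, γ u ≠ ⊥ ∧ ∀ v ∈ S, α v + γ v ≤ α u + γ u := by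
  obtain ⟨w, hw, hγw⟩ := hγ
  obtain ⟨u, hu, hmax⟩ := S.exists_max_image (fun v => α v + γ v) ⟨w, hw⟩
  by_cases hbot : α u + γ u = ⊥
  · exact ⟨w, hw, hγw, fun v hv => (hmax v hv).trans (hbot ▸ bot_le)⟩
  · exact ⟨u, hu, (WithBot.add_ne_bot.1 hbot).2, hmax⟩

variable [AddCommMonoid G] [IsOrderedCancelAddMonoid G]

/-- The descent step: `x`, `y` are the values at `X`, `Y`, the pair `α`, `β` gives the values after
an exchange between them, `γ` the value after a move of `Y`, and `δ` the value after the exchange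
`v` following the move `u`. The loss of `v` persists if the move `u` maximizes `α + γ`. -/
lemma add_lt_add_of_le_max {x y αu αv βu βv γu γv δ : WithBot G}
    (hu : αu + βu < x + y) (hv : αv + βv < x + y) (hγ : γu ≠ ⊥)
    (hmax : αv + γv ≤ αu + γu) (hδ : y + δ ≤ max (γu + βv) (γv + βu)) : αv + δ < x + γu := by
  refine lt_of_add_lt_add_left (a := y) ?_
  calc y + (αv + δ) = αv + (y + δ) := add_left_comm ..
    _ ≤ αv + max (γu + βv) (γv + βu) := by gcongr
    _ = max (γu + (αv + βv)) (αv + γv + βu) := by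
      rw [← max_add_add_left, add_left_comm, add_assoc]
    _ ≤ max (γu + (αv + βv)) (αu + γu + βu) := by gcongr
    _ = γu + max (αv + βv) (αu + βu) := by
      rw [← max_add_add_left, add_comm αu, add_assoc]
    _ < γu + (x + y) := WithBot.add_lt_add_left hγ (max_lt hv hu)
    _ = y + (x + γu) := by abel

lemma add_add_le_add_add_of_chain {a b a' b' c d e : WithBot G} (hd : d ≠ ⊥)
    (h₁ : a + c ≤ a' + d) (h₂ : b + d ≤ b' + e) : a + b + c ≤ a' + b' + e := by
  refine WithBot.le_of_add_le_add_left hd ?_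
  calc d + (a + b + c) = (a + c) + (b + d) := by abel
    _ ≤ (a' + d) + (b' + e) := add_le_add h₁ h₂
    _ = d + (a' + b' + e) := by abel

lemma add_le_add_of_cycle {a b a' b' c d : WithBot G} (hc : c ≠ ⊥) (hd : d ≠ ⊥)
    (h₁ : a + c ≤ a' + d) (h₂ : b + d ≤ b' + c) : a + b ≤ a' + b' :=
  WithBot.le_of_add_le_add_right hc (add_add_le_add_add_of_chain hd h₁ h₂)

lemma four_point_of_triangles {si sj sk sl pij pkl pik pjl pil pjk : WithBot G}
    (hi : si ≠ ⊥) (hk : sk ≠ ⊥) (hl : sl ≠ ⊥)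
    (hijk : pij + sk ≤ max (pjk + si) (pik + sj)) (hijl : pij + sl ≤ max (pjl + si) (pil + sj))
    (hkli : pkl + si ≤ max (pil + sk) (pik + sl)) (hklj : pkl + sj ≤ max (pjl + sk) (pjk + sl)) :
    pij + pkl ≤ max (pik + pjl) (pil + pjk) := by
  wlog hil : pkl + si ≤ pil + sk generalizing sk sl pik pil pjk pjl
  · rw [max_comm] at hkli hklj ⊢
    exact this hl hk hijl hijk hkli hklj ((le_max_iff.1 hkli).resolve_right hil)
  by_contra! hlt
  obtain ⟨hlt₁, hlt₂⟩ := max_lt_iff.1 hlt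
  obtain ⟨hpij, -⟩ := WithBot.add_ne_bot.1 hlt.ne_bot
  have hik : pij + sk ≤ pik + sj := (le_max_iff.1 hijk).resolve_left fun h =>
    hlt₂.not_ge <| by simpa only [add_comm] using add_le_add_of_cycle hi hk hil h
  have hj : sj ≠ ⊥ :=
    (WithBot.add_ne_bot.1 (ne_bot_of_le_ne_bot (WithBot.add_ne_bot.2 ⟨hpij, hk⟩) hik)).2
  have hjk : pkl + sj ≤ pjk + sl := (le_max_iff.1 hklj).resolve_left fun h =>
    hlt₁.not_ge (add_le_add_of_cycle hk hj hik h)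
  have hjl : pij + sl ≤ pjl + si := (le_max_iff.1 hijl).resolve_right fun h =>
    hlt₂.not_ge (add_le_add_of_cycle hl hj h hjk)
  have hsum : (pkl + pij) + (pkl + pij) ≤ (pil + pik) + (pjk + pjl) :=
    add_le_add_of_cycle hi hj (add_add_le_add_add_of_chain hk hil hik)
      (add_add_le_add_add_of_chain hl hjk hjl)
  refine hsum.not_gt ?_
  calc (pil + pik) + (pjk + pjl) = (pik + pjl) + (pil + pjk) := by abel
    _ ≤ (pik + pjl) + (pij + pkl) := by gcongr
    _ < (pij + pkl) + (pij + pkl) := WithBot.add_lt_add_right hlt.ne_bot hlt₁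
    _ = (pkl + pij) + (pkl + pij) := by rw [add_comm pij]

end WithBot

/-- The part of (B♮-EXC) that concerns only the set receiving an element: `Y` can absorb any
element of `X \ Y`, at the cost of giving up at most one element of `Y \ X`. -/
def BExcInsert {N : Type*} [DecidableEq N] (F : Set (Finset N)) : Prop :=
  ∀ X ∈ F, ∀ Y ∈ F, ∀ a ∈ X \ Y, ∃ U ⊆ Y \ X, U.card ≤ 1 ∧ Y \ U ∪ {a} ∈ F

/-- A weakening of both (M♮-EXC) and (M♮-EXC_m): a single element `i` of `X` is exchanged against an
arbitrary subset of `Y \ X`. (M♮-EXC) is the same property with `J` of at most one element. -/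
def MExcOneMany {N : Type*} [DecidableEq N] (f : Finset N → WithBot ℝ) : Prop :=
  ∀ X Y : Finset N, ∀ i ∈ X \ Y, ∃ J ⊆ Y \ X,
    f X + f Y ≤ f ((X \ {i}) ∪ J) + f ((Y \ J) ∪ {i})

section Exchange

variable {N : Type*} [DecidableEq N]

lemma BExc.bExcInsert {F : Set (Finset N)} (hF : BExc F) : BExcInsert F := by
  intro X hX Y hY a ha
  obtain ⟨-, h⟩ | ⟨j, hj, -, h⟩ := hF X hX Y hY a ha
  · exact ⟨∅, by simp, by simp, by simpa [union_comm] using h⟩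
  · refine ⟨{j}, by simpa using hj, by simp, ?_⟩
    rwa [show Y \ {j} ∪ {a} = (insert a Y).erase j by grind]

variable {f : Finset N → WithBot ℝ}

lemma MExcM.mExcOneMany (hf : MExcM f) : MExcOneMany f := fun X Y i hi =>
  hf X Y {i} (singleton_subset_iff.2 hi)

lemma mExc_of_exists_card_le_one
    (h : ∀ X Y : Finset N, f X ≠ ⊥ → f Y ≠ ⊥ → ∀ i ∈ X \ Y, ∃ J ⊆ Y \ X, J.card ≤ 1 ∧
      f X + f Y ≤ f (X \ {i} ∪ J) + f (Y \ J ∪ {i})) : MExc f := by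
  intro X Y i hi
  by_cases hX : f X = ⊥
  · simp [hX]
  by_cases hY : f Y = ⊥
  · simp [hY]
  obtain ⟨J, hJ, hcard, hle⟩ := h X Y hX hY i hi
  obtain rfl | ⟨j, rfl⟩ : J = ∅ ∨ ∃ j, J = {j} := by
    simpa only [Nat.le_one_iff_eq_zero_or_eq_one, card_eq_zero, card_eq_one] using hcard
  · exact le_max_of_le_left (by convert hle using 3 <;> grind)
  · refine le_max_of_le_right (le_trans ?_ (le_sup (singleton_subset_iff.1 hJ)))
    convert hle using 3 <;> grind

namespace MExcOneMany

lemma triangle (hf : MExcOneMany f) {Z : Finset N} {a b c : N} (ha : a ∉ Z) (hab : a ≠ b)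
    (hac : a ≠ c) :
    f (insert a (insert b Z)) + f (insert c Z) ≤
      max (f (insert b (insert c Z)) + f (insert a Z))
        (f (insert a (insert c Z)) + f (insert b Z)) := by
  obtain ⟨J, hJ, h⟩ := hf (insert a (insert b Z)) (insert c Z) a (by grind)
  obtain rfl | rfl : J = {c} ∨ J = ∅ := by grind
  · exact le_max_of_le_left (by convert h using 3 <;> grind)
  · rw [add_comm (f (insert a (insert c Z)))]
    exact le_max_of_le_right (by convert h using 3 <;> grind)

lemma ne_bot_of_add_lt_single_triple (hf : MExcOneMany f) {Z : Finset N} {i j k l : N}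
    (hik : i ≠ k) (hjk : j ≠ k) (hkl : k ≠ l)
    (h : f (insert i (insert k Z)) + f (insert j (insert l Z)) <
      f (insert i Z) + f (insert j (insert k (insert l Z)))) : f (insert k Z) ≠ ⊥ := by
  obtain ⟨J, hJ, hle⟩ := hf (insert j (insert k (insert l Z))) (insert i Z) k (by grind)
  rw [add_comm, add_comm (f (_ ∪ J))] at hle
  by_cases hiJ : i ∈ J
  · have hkJ : insert i Z \ J ∪ {k} = insert k Z := by grind
    exact hkJ ▸ (WithBot.add_ne_bot.1 (ne_bot_of_le_ne_bot h.ne_bot hle)).1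
  · exact absurd (by convert hle using 3 <;> grind) h.not_ge

lemma four_point_of_le_single_triple (hf : MExcOneMany f) {Z : Finset N} {i j k l : N}
    (hd : [i, j, k, l].Nodup) (hZ : ∀ x ∈ [i, j, k, l], x ∉ Z)
    (h : f (insert i (insert j Z)) + f (insert k (insert l Z)) ≤
      f (insert i Z) + f (insert j (insert k (insert l Z)))) :
    f (insert i (insert j Z)) + f (insert k (insert l Z)) ≤
      max (f (insert i (insert k Z)) + f (insert j (insert l Z)))
        (f (insert i (insert l Z)) + f (insert j (insert k Z))) := by
  by_contra! hlt
  obtain ⟨hlt₁, hlt₂⟩ := max_lt_iff.1 hlt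
  have hi : f (insert i Z) ≠ ⊥ := (WithBot.add_ne_bot.1 (ne_bot_of_le_ne_bot hlt.ne_bot h)).1
  have hk : f (insert k Z) ≠ ⊥ :=
    hf.ne_bot_of_add_lt_single_triple (by grind) (by grind) (by grind) (hlt₁.trans_le h)
  have hl : f (insert l Z) ≠ ⊥ :=
    hf.ne_bot_of_add_lt_single_triple (by grind) (by grind) (by grind)
      (insert_comm k l Z ▸ hlt₂.trans_le h)
  refine hlt.not_ge (four_point_of_triangles (sj := f (insert j Z)) hi hk hl ?_ ?_ ?_ ?_)
  · exact hf.triangle (by grind) (by grind) (by grind)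
  · exact hf.triangle (by grind) (by grind) (by grind)
  · rw [insert_comm i l, insert_comm i k]
    exact hf.triangle (by grind) (by grind) (by grind)
  · rw [insert_comm j l, insert_comm j k]
    exact hf.triangle (by grind) (by grind) (by grind)

lemma four_point (hf : MExcOneMany f) {Z : Finset N} {i j k l : N} (hd : [i, j, k, l].Nodup)
    (hZ : ∀ x ∈ [i, j, k, l], x ∉ Z) :
    f (insert i (insert j Z)) + f (insert k (insert l Z)) ≤
      max (f (insert i (insert k Z)) + f (insert j (insert l Z)))
        (f (insert i (insert l Z)) + f (insert j (insert k Z))) := by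
  wlog h : f (insert i (insert j Z)) + f (insert k (insert l Z)) ≤
      f (insert i Z) + f (insert j (insert k (insert l Z))) generalizing i j
  · obtain ⟨J, hJ, hle⟩ := hf (insert i (insert j Z)) (insert k (insert l Z)) i (by grind)
    by_cases hk : k ∈ J <;> by_cases hl : l ∈ J
    · rw [add_comm (f (_ ∪ J))] at hle
      exact absurd (by convert hle using 3 <;> grind) h
    · rw [add_comm (f (_ ∪ J))] at hle
      exact le_max_of_le_right (by convert hle using 3 <;> grind)
    · rw [add_comm (f (_ ∪ J))] at hle
      exact le_max_of_le_left (by convert hle using 3 <;> grind)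
    · have hswap := this (i := j) (j := i) (by grind) (by grind)
        (by convert hle using 3 <;> grind)
      rwa [insert_comm j i, max_comm, add_comm (f (insert j (insert l Z))),
        add_comm (f (insert j (insert k Z)))] at hswap
  · exact hf.four_point_of_le_single_triple hd hZ h

lemma local_exchange (hf : MExcOneMany f) {Y U V : Finset N} {a b : N} (ha : a ∉ Y) (hb : b ∉ Y)
    (hab : a ≠ b) (hU : U ⊆ Y) (hV : V ⊆ Y) (hUV : Disjoint U V) (hU₁ : U.card ≤ 1)
    (hV₁ : V.card ≤ 1) :
    f Y + f ((Y \ U ∪ {a}) \ V ∪ {b}) ≤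
      max (f (Y \ U ∪ {a}) + f (Y \ V ∪ {b})) (f (Y \ V ∪ {a}) + f (Y \ U ∪ {b})) := by
  rw [disjoint_left] at hUV
  by_cases hne : U.Nonempty ∧ V.Nonempty
  · obtain ⟨u, rfl⟩ := card_eq_one.1 (hU₁.antisymm hne.1.card_pos)
    obtain ⟨v, rfl⟩ := card_eq_one.1 (hV₁.antisymm hne.2.card_pos)
    have h := hf.four_point (Z := Y \ {u, v}) (i := v) (j := u) (k := a) (l := b)
      (by grind) (by grind)
    rw [add_comm (f (Y \ {v} ∪ {a}))]
    convert h using 4 <;> grind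
  · obtain ⟨J, hJ, h⟩ := hf ((Y \ U ∪ {a}) \ V ∪ {b}) Y a (by grind)
    rw [add_comm, add_comm (f (_ ∪ J))] at h
    obtain rfl | rfl : J = U ∨ J = V := by grind [card_le_one]
    · exact le_max_of_le_left (by convert h using 3; grind)
    · exact le_max_of_le_right (by convert h using 3; grind)

lemma local_exchange_sdiff_singleton (hf : MExcOneMany f) {Y : Finset N} {i u v : N} (hu : u ∈ Y)
    (huv : u ≠ v) (hi : i ∉ Y) :
    f Y + f ((Y \ {u}) \ {v} ∪ {i}) ≤
      max (f (Y \ {u}) + f (Y \ {v} ∪ {i})) (f (Y \ {v}) + f (Y \ {u} ∪ {i})) := by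
  obtain ⟨J, hJ, h⟩ := hf Y ((Y \ {u}) \ {v} ∪ {i}) u (by grind)
  obtain rfl | rfl : J = ∅ ∨ J = {i} := by grind
  · exact le_max_of_le_left (by convert h using 3 <;> grind)
  · rw [add_comm (f (Y \ {v}))]
    exact le_max_of_le_right (by convert h using 3; grind)

lemma exists_exchange_of_sdiff_eq_singleton (hf : MExcOneMany f) {X Y : Finset N} {i : N}
    (hX : f X ≠ ⊥) (hY : f Y ≠ ⊥) (hi : X \ Y = {i}) (hne : (Y \ X).Nonempty) :
    ∃ j ∈ Y \ X, f X + f Y ≤ f (X \ {i} ∪ {j}) + f (Y \ {j} ∪ {i}) := by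
  induction Y using Finset.strongInduction with
  | H Y ih =>
  by_contra! hcon
  have hdel : ∀ u ∈ Y \ X, f (Y \ {u}) ≠ ⊥ := by
    intro u hu
    obtain ⟨J, hJ, h⟩ := hf Y X u (by grind)
    rw [add_comm] at h
    obtain rfl | rfl : J = {i} ∨ J = ∅ := by grind
    · rw [add_comm (f (_ ∪ _))] at h
      exact absurd h (hcon u hu).not_ge
    · have h' := ne_bot_of_le_ne_bot (WithBot.add_ne_bot.2 ⟨hX, hY⟩) h
      simpa using (WithBot.add_ne_bot.1 h').1
  obtain ⟨w, hw⟩ := hne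
  obtain ⟨u, hu, hfu, hmax⟩ := exists_ne_bot_forall_add_le (γ := fun v => f (Y \ {v}))
    (α := fun v => f (X \ {i} ∪ {v})) ⟨w, hw, hdel w hw⟩
  have hYuX : ((Y \ {u}) \ X).Nonempty := by
    rw [nonempty_iff_ne_empty]
    intro hempty
    have hlt := hcon u hu
    rw [show X \ {i} ∪ {u} = Y by grind, show Y \ {u} ∪ {i} = X by grind, add_comm] at hlt
    exact hlt.false
  obtain ⟨v, hvYu, hle⟩ := ih (Y \ {u}) (by grind) hfu (by grind) hYuX
  have hvY : v ∈ Y \ X := by grind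
  have hlocal := hf.local_exchange_sdiff_singleton (Y := Y) (i := i) (u := u) (v := v) (by grind)
    (by grind) (by grind)
  exact hle.not_gt (add_lt_add_of_le_max (hcon u hu) (hcon v hvY) hfu (hmax v hvY) hlocal)

theorem exists_exchange (hf : MExcOneMany f) (hdom : BExcInsert {X : Finset N | f X ≠ ⊥})
    {X Y : Finset N} (hX : f X ≠ ⊥) (hY : f Y ≠ ⊥) {i : N} (hi : i ∈ X \ Y) :
    ∃ J ⊆ Y \ X, J.card ≤ 1 ∧ f X + f Y ≤ f (X \ {i} ∪ J) + f (Y \ J ∪ {i}) := by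
  induction hn : X \ Y using Finset.strongInduction generalizing Y with
  | H D ih =>
  subst hn
  by_cases hone : X \ Y = {i}
  · obtain hYX | hYX := (Y \ X).eq_empty_or_nonempty
    · refine ⟨∅, by simp, by simp, ?_⟩
      rw [show X \ {i} ∪ ∅ = Y by grind, show Y \ ∅ ∪ {i} = X by grind, add_comm]
    · obtain ⟨j, hj, h⟩ := hf.exists_exchange_of_sdiff_eq_singleton hX hY hone hYX
      exact ⟨{j}, by simpa using hj, by simp, h⟩
  obtain ⟨a, ha, hai⟩ : ∃ a ∈ X \ Y, a ≠ i := by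
    by_contra! h
    exact hone (eq_singleton_iff_unique_mem.2 ⟨hi, h⟩)
  by_contra! hcon
  set S := {U ∈ (Y \ X).powerset | U.card ≤ 1} with hS
  have hloss : ∀ U ∈ S, f (X \ {i} ∪ U) + f (Y \ U ∪ {i}) < f X + f Y := by
    simpa [hS] using hcon
  have hmove : ∃ U ∈ S, f (Y \ U ∪ {a}) ≠ ⊥ := by
    simpa [hS, and_assoc] using hdom X hX Y hY a ha
  obtain ⟨U, hU, hfU, hmax⟩ := exists_ne_bot_forall_add_le
    (α := fun V => f (X \ {i} ∪ V)) hmove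
  obtain ⟨hUYX, hU₁⟩ : U ⊆ Y \ X ∧ U.card ≤ 1 := by simpa [hS] using hU
  obtain ⟨V, hV, hV₁, hle⟩ := ih (X \ (Y \ U ∪ {a})) (by grind) hfU (by grind) rfl
  have hVS : V ∈ S := by
    simp only [hS, mem_filter, mem_powerset]
    exact ⟨by grind, hV₁⟩
  have hlocal := hf.local_exchange (Y := Y) (U := U) (V := V) (a := a) (b := i) (by grind)
    (by grind) hai (by grind) (by grind) (by grind [disjoint_left]) hU₁ hV₁
  exact hle.not_gt (add_lt_add_of_le_max (hloss U hU) (hloss V hVS) hfU (hmax V hVS) hlocal)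

end MExcOneMany

end Exchange

theorem mexcm_implies_mexc_of_dom_bexc_general {N : Type*} [DecidableEq N]
    (f : Finset N → WithBot ℝ) (hdom : BExcInsert {X : Finset N | f X ≠ ⊥})
    (hf : MExcOneMany f) : MExc f :=
  mExc_of_exists_card_le_one fun _ _ hX hY _ hi => hf.exists_exchange hdom hX hY hi

theorem mexcm_implies_mexc_of_dom_bexc {N : Type*} [Fintype N] [DecidableEq N]
    (f : Finset N → WithBot ℝ) (hdom : BExc {X : Finset N | f X ≠ ⊥})
    (hf : MExcM f) : MExc f :=
  mexcm_implies_mexc_of_dom_bexc_general f hdom.bExcInsert hf.mExcOneMany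
end

section
/- A set function f : 2^N → ℝ ∪ {-∞} with dom f ≠ ∅ is M♮-concave if and only if dom f satisfies (B♮-EXC) and f satisfies the following three local conditions: (1) f(X + i + j) + f(X) ≤ f(X + i) + f(X + j) for all X ⊆ N and distinct i, j ∈ N \ X; (2) f(X + i + j) + f(X + k) ≤ max[ f(X + i + k) + f(X + j), f(X + j + k) + f(X + i) ] for all X ⊆ N and distinct i, j, k ∈ N \ X; (3) f(X + i + j) + f(X + k + l) ≤ max[ f(X + i + k) + f(X + j + l), f(X + j + k) + f(X + i + l) ] for all X ⊆ N and distinct i, j, k, l ∈ N \ X. -/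
open Finset

/-!
The necessity of the local conditions comes from exchanging a single element; for `LocalExc₂₂` two
exchanges, one at `i` and one at `j`, are added up and combined with local submodularity.

For the sufficiency, pad all sets with dummy elements on which `f` does not depend. Any two sets
become equicardinal, (M♮-EXC) becomes the exchange property of valuated matroids, and the three
local conditions merge into the three-term one. That one is local-to-global: if exchanging
`u ∈ A \ B` fails for every `v ∈ B \ A`, there are numbers `p v` with
`g (A - u + v) + p v ≤ g A` and `g (B + u - v) < g B + p v`. The second family of inequalities
persists when `B` is moved towards `A` along a best exchange `B + w - v₀`, measured by
`g (B + w - v) - p v`. When only `u` is left in `A \ B`, the two families contradict each other.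
-/

section Finset

variable {E : Type*} [DecidableEq E] {A B : Finset E} {u v : E}

lemma card_erase_insert_of_notMem_of_mem (hu : u ∉ B) (hv : v ∈ B) :
    #((insert u B).erase v) = #B := by
  rw [card_erase_of_mem (mem_insert_of_mem hv), card_insert_of_notMem hu, Nat.add_sub_cancel]

lemma sdiff_nonempty_of_card_eq (hcard : #A = #B) (h : (A \ B).Nonempty) : (B \ A).Nonempty :=
  card_pos.1 (card_sdiff_comm hcard ▸ card_pos.2 h)

lemma sdiff_erase_insert_ssubset (huA : u ∈ A) (huB : u ∉ B) (hv : v ∉ A) :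
    A \ (insert u B).erase v ⊂ A \ B := by
  rw [Finset.ssubset_iff_of_subset (by grind)]
  exact ⟨u, by grind, by grind⟩

lemma insert_erase_eq_of_sdiff_eq_singleton (hcard : #A = #B) (hAB : A \ B = {u})
    (hv : v ∈ B \ A) : insert v (A.erase u) = B := by
  have huA : u ∈ A := (mem_sdiff.1 (hAB ▸ mem_singleton_self u)).1
  rw [mem_sdiff] at hv
  refine eq_of_subset_of_card_le (insert_subset hv.1 fun x hx => ?_) ?_
  · by_contra hxB
    have hxu : x ∈ A \ B := mem_sdiff.2 ⟨mem_of_mem_erase hx, hxB⟩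
    rw [hAB, mem_singleton] at hxu
    exact ne_of_mem_erase hx hxu
  · rw [card_insert_of_notMem fun h => hv.2 (mem_of_mem_erase h), card_erase_add_one huA, hcard]

end Finset

section WithBot

section Monoid

variable {α : Type*} [AddCommMonoid α] [LinearOrder α] [IsOrderedCancelAddMonoid α]

lemma le_or_le_of_add_self_le_add {x y z : WithBot α} (h : x + x ≤ y + z) : x ≤ y ∨ x ≤ z := by
  by_contra! hlt
  exact h.not_gt <| (add_le_add_left hlt.1.le z).trans_lt
    (WithBot.add_lt_add_left hlt.1.ne_bot hlt.2)

lemma lt_add_of_add_le_max {b c x y z t : WithBot α} {p q : α} (hc : c ≠ ⊥)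
    (h : b + x ≤ max (y + z) (c + t)) (hy : y + q ≤ c + p) (hz : z < b + q) (ht : t < b + p) :
    x < c + p := by
  have hb : b ≠ ⊥ := (WithBot.add_ne_bot.1 ht.ne_bot).1
  refine lt_of_add_lt_add_left (a := b) (h.trans_lt (max_lt ?_ ?_))
  · rcases eq_or_ne y ⊥ with rfl | hy'
    · simp [WithBot.bot_lt_iff_ne_bot, hb, hc]
    · calc y + z < y + (b + q) := WithBot.add_lt_add_left hy' hz
        _ = b + (y + q) := add_left_comm _ _ _
        _ ≤ b + (c + p) := by gcongr
  · calc c + t < c + (b + p) := WithBot.add_lt_add_left hc ht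
      _ = b + (c + p) := add_left_comm _ _ _

end Monoid

section Group

variable {α : Type*} [AddCommGroup α] [LinearOrder α] [IsOrderedAddMonoid α]

lemma exists_add_le_and_lt_add [Nontrivial α] {x y : WithBot α} {a b : α} (h : x + y < a + b) :
    ∃ p : α, x + p ≤ a ∧ y < b + p := by
  cases x with
  | bot =>
    cases y with
    | bot => exact ⟨0, by simp, by simp⟩
    | coe y =>
      obtain ⟨p, hp⟩ := exists_gt (y - b)
      exact ⟨p, by simp, mod_cast sub_lt_iff_lt_add'.1 hp⟩
  | coe x =>
    refine ⟨a - x, mod_cast (add_sub_cancel x a).le, ?_⟩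
    cases y with
    | bot => exact WithBot.bot_lt_coe _
    | coe y =>
      norm_cast at h ⊢
      rwa [add_sub, lt_sub_iff_add_lt', add_comm b]

lemma exists_mem_forall_add_le_add {ι : Type*} {s : Finset ι} {y : ι → WithBot α} (p : ι → α)
    (hs : ∃ v ∈ s, y v ≠ ⊥) : ∃ v₀ ∈ s, y v₀ ≠ ⊥ ∧ ∀ v ∈ s, y v + p v₀ ≤ y v₀ + p v := by
  obtain ⟨v₁, hv₁, hy₁⟩ := hs
  obtain ⟨v₀, hv₀, hmax⟩ := s.exists_max_image (fun v => y v + (-p v : α)) ⟨v₁, hv₁⟩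
  have hy₀ : y v₀ ≠ ⊥ := (WithBot.add_ne_bot.1 <| ne_bot_of_le_ne_bot
    (WithBot.add_ne_bot.2 ⟨hy₁, WithBot.coe_ne_bot⟩) (hmax v₁ hv₁)).1
  have hcancel (z : WithBot α) (a b : α) : z + (-a : α) + (a + b : α) = z + b := by
    rw [add_assoc, ← WithBot.coe_add, neg_add_cancel_left]
  refine ⟨v₀, hv₀, hy₀, fun v hv => ?_⟩
  calc y v + p v₀ = y v + (-p v : α) + (p v + p v₀ : α) := (hcancel _ _ _).symm
    _ ≤ y v₀ + (-p v₀ : α) + (p v + p v₀ : α) := add_le_add_left (hmax v hv) _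
    _ = y v₀ + p v := by rw [add_comm (p v), hcancel]

end Group

end WithBot

section Defs

variable {N α : Type*}

/-- The effective domain `dom f`. -/
def effDom (f : Finset N → WithBot α) : Set (Finset N) :=
  {X | f X ≠ ⊥}

variable [DecidableEq N] [Add α] [LinearOrder α]

/-- Local condition (1), local submodularity. The indices in `LocalExc₂₀`, `LocalExc₂₁`,
`LocalExc₂₂` are the sizes of `Y \ Z` and `Z \ Y` for the sets `Y`, `Z` on the left-hand side. -/
def LocalExc₂₀ (f : Finset N → WithBot α) : Prop :=
  ∀ X : Finset N, ∀ i ∉ X, ∀ j ∉ X, i ≠ j →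
    f (insert j (insert i X)) + f X ≤ f (insert i X) + f (insert j X)

/-- Local condition (2). -/
def LocalExc₂₁ (f : Finset N → WithBot α) : Prop :=
  ∀ X : Finset N, ∀ i ∉ X, ∀ j ∉ X, ∀ k ∉ X, i ≠ j → i ≠ k → j ≠ k →
    f (insert j (insert i X)) + f (insert k X) ≤
      max (f (insert k (insert i X)) + f (insert j X))
        (f (insert k (insert j X)) + f (insert i X))

/-- Local condition (3), the three-term exchange inequality of valuated matroids. -/
def LocalExc₂₂ (f : Finset N → WithBot α) : Prop :=
  ∀ X : Finset N, ∀ i ∉ X, ∀ j ∉ X, ∀ k ∉ X, ∀ l ∉ X,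
    i ≠ j → i ≠ k → i ≠ l → j ≠ k → j ≠ l → k ≠ l →
    f (insert j (insert i X)) + f (insert l (insert k X)) ≤
      max (f (insert k (insert i X)) + f (insert l (insert j X)))
        (f (insert k (insert j X)) + f (insert l (insert i X)))

/-- (B-EXC₊): one-sided basis exchange, imposed on pairs of equicardinal members of `F` only, so
that `F` may be a union of families of different ranks. -/
def BExcPlus (F : Set (Finset N)) : Prop :=
  ∀ A ∈ F, ∀ B ∈ F, #A = #B → ∀ u ∈ A \ B, ∃ v ∈ B \ A, (insert u B).erase v ∈ F

/-- The exchange property of valuated matroids, imposed on pairs of equicardinal sets only. -/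
def ValuatedExc (g : Finset N → WithBot α) : Prop :=
  ∀ A B : Finset N, #A = #B → ∀ u ∈ A \ B,
    ∃ v ∈ B \ A, g A + g B ≤ g (insert v (A.erase u)) + g ((insert u B).erase v)

/-- The extension of `f` to sets padded with dummy elements (the right summand), on which it does
not depend. Padding makes any two subsets of `N` equicardinal. -/
def homogenization (f : Finset N → WithBot α) (Z : Finset (N ⊕ ℕ)) : WithBot α :=
  f Z.toLeft

end Defs

section Necessity

variable {N : Type*} [DecidableEq N] {f : Finset N → WithBot ℝ}

lemma mExc_iff_exists : MExc f ↔ ∀ X Y : Finset N, ∀ i ∈ X \ Y,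
    f X + f Y ≤ f (X.erase i) + f (insert i Y) ∨
      ∃ j ∈ Y \ X, f X + f Y ≤ f (insert j (X.erase i)) + f ((insert i Y).erase j) := by
  refine forall₂_congr fun X Y => forall₂_congr fun i _ => ?_
  rcases eq_or_ne (f X + f Y) ⊥ with h | h
  · simp only [h, bot_le, true_or]
  · rw [le_max_iff, Finset.le_sup_iff (bot_lt_iff_ne_bot.2 h)]

namespace MExc

lemma bExc_effDom (hf : MExc f) : BExc (effDom f) := by
  intro X hX Y hY i hi
  have hXY : f X + f Y ≠ ⊥ := WithBot.add_ne_bot.2 ⟨hX, hY⟩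
  obtain h | ⟨j, hj, h⟩ := mExc_iff_exists.1 hf X Y i hi
  · exact .inl (WithBot.add_ne_bot.1 (ne_bot_of_le_ne_bot hXY h))
  · exact .inr ⟨j, hj, WithBot.add_ne_bot.1 (ne_bot_of_le_ne_bot hXY h)⟩

lemma localExc₂₀ (hf : MExc f) : LocalExc₂₀ f := by
  intro X i hi j _ hij
  obtain h | ⟨k, hk, -⟩ := mExc_iff_exists.1 hf (insert j (insert i X)) X i (by simp [hi])
  · rwa [show (insert j (insert i X)).erase i = insert j X by grind, add_comm (f (insert j X))] at h
  · grind

lemma localExc₂₁ (hf : MExc f) : LocalExc₂₁ f := by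
  intro X i hi j _ k hk hij hik hjk
  have herase : (insert j (insert i X)).erase i = insert j X := by grind
  obtain h | ⟨l, hl, h⟩ := mExc_iff_exists.1 hf (insert j (insert i X)) (insert k X) i (by grind)
  · rw [herase, Finset.insert_comm i k, add_comm (f (insert j X))] at h
    exact le_max_of_le_left h
  · obtain rfl : l = k := by grind
    rw [herase, show (insert i (insert l X)).erase l = insert i X by grind] at h
    exact le_max_of_le_right h

lemma insert_insert_add_le_or (hf : MExc f) {X : Finset N} {i j k l : N} (hi : i ∉ X)
    (hk : k ∉ X) (hl : l ∉ X) (hij : i ≠ j) (hik : i ≠ k) (hil : i ≠ l) (hkl : k ≠ l) :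
    f (insert j (insert i X)) + f (insert l (insert k X)) ≤
        f (insert l (insert k (insert i X))) + f (insert j X) ∨
      f (insert j (insert i X)) + f (insert l (insert k X)) ≤
        max (f (insert k (insert i X)) + f (insert l (insert j X)))
          (f (insert k (insert j X)) + f (insert l (insert i X))) := by
  have herase : (insert j (insert i X)).erase i = insert j X := by grind
  obtain h | ⟨m, hm, h⟩ :=
    mExc_iff_exists.1 hf (insert j (insert i X)) (insert l (insert k X)) i (by grind)
  · rw [herase, show insert i (insert l (insert k X)) = insert l (insert k (insert i X)) by grind,
      add_comm (f (insert j X))] at h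
    exact .inl h
  · obtain rfl | rfl : m = k ∨ m = l := by grind
    · rw [herase, show (insert i (insert l (insert m X))).erase m = insert l (insert i X) by grind]
        at h
      exact .inr (le_max_of_le_right h)
    · rw [herase, show (insert i (insert m (insert k X))).erase m = insert k (insert i X) by grind,
        add_comm (f (insert m (insert j X)))] at h
      exact .inr (le_max_of_le_left h)

lemma localExc₂₂ (hf : MExc f) : LocalExc₂₂ f := by
  intro X i hi j hj k hk l hl hij hik hil hjk hjl hkl
  obtain h₁ | h₁ := hf.insert_insert_add_le_or hi hk hl hij hik hil hkl
  · obtain h₂ | h₂ := hf.insert_insert_add_le_or hj hk hl hij.symm hjk hjl hkl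
    · rw [Finset.insert_comm i j] at h₂
      have hsub (m : N) (hmk : m ≠ k) (hml : m ≠ l) :
          f (insert l (insert k (insert m X))) + f (insert m X) ≤
            f (insert k (insert m X)) + f (insert l (insert m X)) :=
        hf.localExc₂₀ (insert m X) k (by simp [hk, hmk.symm]) l (by simp [hl, hml.symm]) hkl
      refine le_max_iff.2 (le_or_le_of_add_self_le_add ?_)
      calc
        _ ≤ (f (insert l (insert k (insert i X))) + f (insert j X)) +
            (f (insert l (insert k (insert j X))) + f (insert i X)) := add_le_add h₁ h₂
        _ = (f (insert l (insert k (insert i X))) + f (insert i X)) +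
            (f (insert l (insert k (insert j X))) + f (insert j X)) := by
          rw [add_add_add_comm, add_comm (f (insert j X)), add_add_add_comm]
        _ ≤ (f (insert k (insert i X)) + f (insert l (insert i X))) +
            (f (insert k (insert j X)) + f (insert l (insert j X))) :=
          add_le_add (hsub i hik hil) (hsub j hjk hjl)
        _ = _ := by rw [add_add_add_comm, add_comm (f (insert l (insert i X))), add_add_add_comm]
    · rwa [Finset.insert_comm i j, max_comm] at h₂
  · exact h₁

end MExc

end Necessity

namespace LocalExc₂₂

variable {E α : Type*} [DecidableEq E] [LinearOrder α] {g : Finset E → WithBot α}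

lemma add_le_max [Add α] (hg : LocalExc₂₂ g) {B : Finset E} {v v' w w' : E} (hv : v ∈ B)
    (hv' : v' ∈ B) (hvv' : v ≠ v') (hw : w ∉ B) (hw' : w' ∉ B) (hww' : w ≠ w') :
    g B + g ((insert w' ((insert w B).erase v)).erase v') ≤
      max (g ((insert w B).erase v') + g ((insert w' B).erase v))
        (g ((insert w B).erase v) + g ((insert w' B).erase v')) := by
  obtain ⟨W, hvW, hv'W, rfl⟩ : ∃ W, v ∉ W ∧ v' ∉ W ∧ insert v' (insert v W) = B :=
    ⟨(B.erase v).erase v', by simp, by simp, by grind⟩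
  have h := hg W v hvW v' hv'W w (by grind) w' (by grind) hvv' (by grind) (by grind) (by grind)
    (by grind) hww'
  clear hg
  convert h using 4 <;> grind

lemma lt_add_of_exchange [AddCommMonoid α] [IsOrderedCancelAddMonoid α] (hg : LocalExc₂₂ g)
    {B : Finset E} {u v v₀ w : E} {p : E → α} (hv₀ : v₀ ∈ B) (hv : v ∈ B) (hvv₀ : v₀ ≠ v)
    (hu : u ∉ B) (hw : w ∉ B) (hwu : w ≠ u) (hdom : g ((insert w B).erase v₀) ≠ ⊥)
    (hmax : g ((insert w B).erase v) + p v₀ ≤ g ((insert w B).erase v₀) + p v)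
    (hlt₀ : g ((insert u B).erase v₀) < g B + p v₀) (hlt : g ((insert u B).erase v) < g B + p v) :
    g ((insert u ((insert w B).erase v₀)).erase v) < g ((insert w B).erase v₀) + p v :=
  lt_add_of_add_le_max hdom (hg.add_le_max hv₀ hv hvv₀ hw hu hwu) hmax hlt₀ hlt

variable [AddCommGroup α] [IsOrderedAddMonoid α]

lemma exists_add_le_of_forall_add_le (hg : LocalExc₂₂ g) (hdom : BExcPlus (effDom g))
    {A B : Finset E} (hcard : #A = #B) {u : E} (hu : u ∈ A \ B) (hA : g A ≠ ⊥) {p : E → α}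
    (hp : ∀ v ∈ B \ A, g (insert v (A.erase u)) + p v ≤ g A) :
    ∃ v ∈ B \ A, g B + p v ≤ g ((insert u B).erase v) := by
  induction hn : #(A \ B) using Nat.strong_induction_on generalizing B with
  | _ n ih =>
    by_contra! hlt
    obtain ⟨v₁, hv₁⟩ := sdiff_nonempty_of_card_eq hcard ⟨u, hu⟩
    have hB : g B ≠ ⊥ := (WithBot.add_ne_bot.1 (hlt v₁ hv₁).ne_bot).1
    by_cases hsingle : A \ B = {u}
    · have hAv : insert v₁ (A.erase u) = B :=
        insert_erase_eq_of_sdiff_eq_singleton hcard hsingle hv₁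
      have hBu : (insert u B).erase v₁ = A := by
        rw [← hAv, Finset.insert_comm, insert_erase (mem_sdiff.1 hu).1,
          erase_insert (mem_sdiff.1 hv₁).2]
      refine (hlt v₁ hv₁).not_ge ?_
      rw [hBu, ← hAv]
      exact hp v₁ hv₁
    · obtain ⟨w, hw, hwu⟩ : ∃ w ∈ A \ B, w ≠ u := by
        simpa [eq_singleton_iff_unique_mem, hu, and_assoc] using hsingle
      obtain ⟨v₀, hv₀, hdom₀, hmax⟩ := exists_mem_forall_add_le_add p (hdom A hA B hB hcard w hw)
      have hsdiff : ∀ v ∈ (insert w B).erase v₀ \ A, v ∈ B \ A ∧ v₀ ≠ v := by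
        clear * - hw
        grind
      rw [mem_sdiff] at hu hw hv₀
      obtain ⟨v, hv, hle⟩ := ih _
        (hn ▸ card_lt_card (sdiff_erase_insert_ssubset hw.1 hw.2 hv₀.2))
        (by rw [card_erase_insert_of_notMem_of_mem hw.2 hv₀.1, hcard])
        (by simp [hu, hwu.symm]) (fun v hv => hp v (hsdiff v hv).1) rfl
      obtain ⟨hvBA, hvv₀⟩ := hsdiff v hv
      exact (hg.lt_add_of_exchange hv₀.1 (mem_sdiff.1 hvBA).1 hvv₀ hu.2 hw.2 hwu hdom₀
        (hmax v hvBA) (hlt v₀ (mem_sdiff.2 hv₀)) (hlt v hvBA)).not_ge hle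

theorem valuatedExc [Nontrivial α] (hg : LocalExc₂₂ g) (hdom : BExcPlus (effDom g)) :
    ValuatedExc g := by
  intro A B hcard u hu
  by_contra! hlt
  obtain ⟨v, hv⟩ := sdiff_nonempty_of_card_eq hcard ⟨u, hu⟩
  obtain ⟨hA, hB⟩ := WithBot.add_ne_bot.1 (hlt v hv).ne_bot
  obtain ⟨a, ha⟩ := WithBot.ne_bot_iff_exists.1 hA
  obtain ⟨b, hb⟩ := WithBot.ne_bot_iff_exists.1 hB
  rw [← ha, ← hb] at hlt
  choose! p hpA hpB using fun v hv => exists_add_le_and_lt_add (hlt v hv)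
  rw [ha] at hpA
  obtain ⟨v, hv, hle⟩ := hg.exists_add_le_of_forall_add_le hdom hcard hu hA hpA
  exact (hpB v hv).not_ge (hb ▸ hle)

end LocalExc₂₂

namespace BExc

variable {N : Type*} [DecidableEq N] {F : Set (Finset N)} {X Y : Finset N}

lemma exists_erase_mem (hF : BExc F) (hX : X ∈ F) (hY : Y ∈ F) (hcard : #X < #Y) :
    ∃ j ∈ Y \ X, Y.erase j ∈ F := by
  induction hn : #(Y \ X) using Nat.strong_induction_on generalizing X with
  | _ n ih =>
    obtain ⟨i, hiY, hiX⟩ := exists_mem_notMem_of_card_lt_card hcard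
    have hi : i ∈ Y \ X := mem_sdiff.2 ⟨hiY, hiX⟩
    obtain ⟨hmem, -⟩ | ⟨j, hj, -, hmem⟩ := hF Y hY X hX i hi
    · exact ⟨i, hi, hmem⟩
    · rw [mem_sdiff] at hj
      have hsub : Y \ (insert i X).erase j ⊂ Y \ X := sdiff_erase_insert_ssubset hiY hiX hj.2
      obtain ⟨k, hk, hkF⟩ := ih _ (hn ▸ card_lt_card hsub) hmem
        (by rwa [card_erase_insert_of_notMem_of_mem hiX hj.1]) rfl
      exact ⟨k, hsub.subset hk, hkF⟩

lemma exists_erase_insert_mem (hF : BExc F) (hX : X ∈ F) (hY : Y ∈ F) (hcard : #X ≤ #Y) {i : N}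
    (hi : i ∈ X \ Y) : ∃ j ∈ Y \ X, (insert i Y).erase j ∈ F := by
  obtain ⟨-, hmem⟩ | ⟨j, hj, -, hmem⟩ := hF X hX Y hY i hi
  · rw [mem_sdiff] at hi
    obtain ⟨j, hj, hjF⟩ := hF.exists_erase_mem hX hmem
      (by rw [card_insert_of_notMem hi.2]; exact Nat.lt_succ_of_le hcard)
    exact ⟨j, by grind, hjF⟩
  · exact ⟨j, hj, hmem⟩

end BExc

section Homogenization

variable {N α : Type*} [DecidableEq N] {f : Finset N → WithBot α}

lemma toLeft_erase_inl {M : Type*} [DecidableEq M] (Z : Finset (N ⊕ M)) (i : N) :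
    (Z.erase (.inl i)).toLeft = Z.toLeft.erase i := by
  ext
  simp

lemma toLeft_erase_inr {M : Type*} [DecidableEq M] (Z : Finset (N ⊕ M)) (m : M) :
    (Z.erase (.inr m)).toLeft = Z.toLeft := by
  ext
  simp

lemma localExc₂₂_homogenization [AddCommSemigroup α] [LinearOrder α]
    (h₂₀ : LocalExc₂₀ f) (h₂₁ : LocalExc₂₁ f) (h₂₂ : LocalExc₂₂ f) :
    LocalExc₂₂ (homogenization f) := by
  intro W i hi j hj k hk l hl hij hik hil hjk hjl hkl
  rcases i with i | i <;> rcases j with j | j <;> rcases k with k | k <;> rcases l with l | l <;>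
    simp only [homogenization, toLeft_insert_inl, toLeft_insert_inr, ← mem_toLeft, ne_eq,
      Sum.inl.injEq] at *
  case inl.inl.inl.inl => exact h₂₂ _ i hi j hj k hk l hl hij hik hil hjk hjl hkl
  case inl.inl.inl.inr => exact h₂₁ _ i hi j hj k hk hij hik hjk
  case inl.inl.inr.inl =>
    simpa only [add_comm, max_comm] using h₂₁ _ i hi j hj l hl hij hil hjl
  case inl.inr.inl.inl =>
    simpa only [add_comm, max_comm, Finset.insert_comm] using
      h₂₁ _ k hk l hl i hi hkl (Ne.symm hik) (Ne.symm hil)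
  case inr.inl.inl.inl =>
    simpa only [add_comm, max_comm, Finset.insert_comm] using
      h₂₁ _ k hk l hl j hj hkl (Ne.symm hjk) (Ne.symm hjl)
  case inl.inl.inr.inr => simpa only [add_comm, max_self] using h₂₀ _ i hi j hj hij
  case inr.inr.inl.inl => simpa only [add_comm, max_self] using h₂₀ _ k hk l hl hkl
  all_goals simp [add_comm]

lemma BExc.bExcPlus_effDom_homogenization (hF : BExc (effDom f)) :
    BExcPlus (effDom (homogenization f)) := by
  intro A hA B hB hcard u hu
  change A.toLeft ∈ effDom f at hA
  change B.toLeft ∈ effDom f at hB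
  suffices ∃ v ∈ B \ A, ((insert u B).erase v).toLeft ∈ effDom f from this
  have hA' := card_toLeft_add_card_toRight (u := A)
  have hB' := card_toLeft_add_card_toRight (u := B)
  by_cases hR : B.toRight ⊆ A.toRight
  · rcases u with i | m
    · have hcardR := card_le_card hR
      obtain ⟨j, hj, hmem⟩ := hF.exists_erase_insert_mem hA hB (by lia) (i := i) (by simpa using hu)
      exact ⟨.inl j, by simpa using hj, by rwa [toLeft_erase_inl, toLeft_insert_inl]⟩
    · have hcardR : #B.toRight < #A.toRight :=
        card_lt_card ((Finset.ssubset_iff_of_subset hR).2 ⟨m, by simpa using hu⟩)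
      obtain ⟨j, hj, hmem⟩ := hF.exists_erase_mem hA hB (by lia)
      exact ⟨.inl j, by simpa using hj, by rwa [toLeft_erase_inl, toLeft_insert_inr]⟩
  · obtain ⟨m, hmB, hmA⟩ := Finset.not_subset.1 hR
    have hm : .inr m ∈ B \ A := mem_sdiff.2 ⟨mem_toRight.1 hmB, mt mem_toRight.2 hmA⟩
    rcases u with i | n
    · obtain ⟨-, hmem⟩ | ⟨j, hj, -, hmem⟩ := hF _ hA _ hB i (by simpa using hu)
      · exact ⟨.inr m, hm, by rwa [toLeft_erase_inr, toLeft_insert_inl]⟩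
      · exact ⟨.inl j, by simpa using hj, by rwa [toLeft_erase_inl, toLeft_insert_inl]⟩
    · exact ⟨.inr m, hm, by rwa [toLeft_erase_inr, toLeft_insert_inr]⟩

lemma ValuatedExc.mExc_of_homogenization {f : Finset N → WithBot ℝ}
    (hf : ValuatedExc (homogenization f)) : MExc f := by
  refine mExc_iff_exists.2 fun X Y i hi => ?_
  obtain ⟨v, hv, hle⟩ := hf (X.disjSum (range #Y)) (Y.disjSum (range #X))
    (by simp [add_comm]) (.inl i) (by simpa using hi)
  rcases v with j | m <;>
    simp only [homogenization, toLeft_erase_inl, toLeft_erase_inr, toLeft_insert_inl,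
      toLeft_insert_inr, toLeft_disjSum] at hle
  · exact .inr ⟨j, by simpa using hv, hle⟩
  · exact .inl hle

end Homogenization

theorem mnat_concave_local_characterization_general {N : Type*} [DecidableEq N]
    (f : Finset N → WithBot ℝ) :
    MExc f ↔ BExc (effDom f) ∧ LocalExc₂₀ f ∧ LocalExc₂₁ f ∧ LocalExc₂₂ f :=
  ⟨fun hf => ⟨hf.bExc_effDom, hf.localExc₂₀, hf.localExc₂₁, hf.localExc₂₂⟩,
    fun ⟨hF, h₂₀, h₂₁, h₂₂⟩ => ((localExc₂₂_homogenization h₂₀ h₂₁ h₂₂).valuatedExc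
      hF.bExcPlus_effDom_homogenization).mExc_of_homogenization⟩

theorem mnat_concave_local_characterization {N : Type*} [Fintype N] [DecidableEq N]
    (f : Finset N → WithBot ℝ) (hdom : ∃ X, f X ≠ ⊥) :
    MExc f ↔
      (BExc {X : Finset N | f X ≠ ⊥} ∧
        (∀ X : Finset N, ∀ i ∉ X, ∀ j ∉ X, i ≠ j →
          f (insert j (insert i X)) + f X ≤ f (insert i X) + f (insert j X)) ∧
        (∀ X : Finset N, ∀ i ∉ X, ∀ j ∉ X, ∀ k ∉ X, i ≠ j → i ≠ k → j ≠ k →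
          f (insert j (insert i X)) + f (insert k X) ≤
            max (f (insert k (insert i X)) + f (insert j X))
              (f (insert k (insert j X)) + f (insert i X))) ∧
        (∀ X : Finset N, ∀ i ∉ X, ∀ j ∉ X, ∀ k ∉ X, ∀ l ∉ X,
          i ≠ j → i ≠ k → i ≠ l → j ≠ k → j ≠ l → k ≠ l →
          f (insert j (insert i X)) + f (insert l (insert k X)) ≤
            max (f (insert k (insert i X)) + f (insert l (insert j X)))
              (f (insert k (insert j X)) + f (insert l (insert i X))))) :=
  mnat_concave_local_characterization_general f
end

section
/- If a set function f : 2^N → ℝ ∪ {-∞} satisfies the multiple exchange property (M♮-EXC_m), then f(X + i + j) + f(X + k) ≤ max[ f(X + i + k) + f(X + j), f(X + j + k) + f(X + i) ] for all X ⊆ N and all distinct i, j, k ∈ N \ X. -/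
open Finset

/-! Moving `i` from `X + i + j` to `X + k` can bring back only a subset of `{k}`. Bringing back
nothing yields the first term of the maximum, and bringing back `k` yields the second. -/

/-- One-to-many exchange: a single element `i` moves from `X` to `Y`, against an arbitrary set `J`
moving back. This is the case `I = {i}` of (M♮-EXC_m), with values in any ordered additive
structure. -/
def OneToManyExchange {N R : Type*} [DecidableEq N] [Add R] [LE R] (f : Finset N → R) : Prop :=
  ∀ X Y : Finset N, ∀ i ∈ X \ Y, ∃ J ⊆ Y \ X,
    f X + f Y ≤ f (X.erase i ∪ J) + f (insert i (Y \ J))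

theorem MExcM.oneToManyExchange {N : Type*} [DecidableEq N] {f : Finset N → WithBot ℝ}
    (hf : MExcM f) : OneToManyExchange f := by
  intro X Y i hi
  simpa only [sdiff_singleton_eq_erase, union_singleton] using
    hf X Y {i} (singleton_subset_iff.mpr hi)

section

variable {N R : Type*} [DecidableEq N] [LinearOrder R] {f : Finset N → R}

theorem OneToManyExchange.le_max_of_sdiff_subset_singleton [Add R] (hf : OneToManyExchange f)
    {X Y : Finset N} {i k : N} (hi : i ∈ X \ Y) (hk : Y \ X ⊆ {k}) :
    f X + f Y ≤ max (f (X.erase i) + f (insert i Y))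
      (f (insert k (X.erase i)) + f (insert i (Y.erase k))) := by
  obtain ⟨J, hJ, hexchange⟩ := hf X Y i hi
  obtain rfl | rfl := subset_singleton_iff.mp (hJ.trans hk)
  · rw [union_empty, sdiff_empty] at hexchange
    exact le_max_of_le_left hexchange
  · rw [union_singleton, sdiff_singleton_eq_erase] at hexchange
    exact le_max_of_le_right hexchange

theorem mexcm_implies_local_exchange3_general [AddCommMagma R] (hf : OneToManyExchange f)
    {X : Finset N} {i j k : N} (hi : i ∉ X) (hk : k ∉ X) (hij : i ≠ j) (hik : i ≠ k) :
    f (insert j (insert i X)) + f (insert k X) ≤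
      max (f (insert k (insert i X)) + f (insert j X))
        (f (insert k (insert j X)) + f (insert i X)) := by
  have hi_sdiff : i ∈ insert j (insert i X) \ insert k X := by simp [hi, hik]
  have hk_sdiff : insert k X \ insert j (insert i X) ⊆ {k} := by grind
  have herase : (insert j (insert i X)).erase i = insert j X := by
    rw [erase_insert_of_ne hij.symm, erase_insert hi]
  have hexchange := hf.le_max_of_sdiff_subset_singleton hi_sdiff hk_sdiff
  rwa [herase, erase_insert hk, insert_comm i k, add_comm (f (insert j X))] at hexchange

end

theorem mexcm_implies_local_exchange3 {N : Type*} [Fintype N] [DecidableEq N]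
    (f : Finset N → WithBot ℝ) (hf : MExcM f) :
    ∀ X : Finset N, ∀ i ∉ X, ∀ j ∉ X, ∀ k ∉ X, i ≠ j → i ≠ k → j ≠ k →
      f (insert j (insert i X)) + f (insert k X) ≤
        max (f (insert k (insert i X)) + f (insert j X))
          (f (insert k (insert j X)) + f (insert i X)) := by
  intro X i hi j _ k hk hij hik _
  exact mexcm_implies_local_exchange3_general hf.oneToManyExchange hi hk hij hik
end
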